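/- Let m ≥ 2 be an integer and B_1, B_2 > 1 real numbers. Let t = t_{B_1}^{(m)} and assume 1/2 < t < 1, and set θ_m = (t^m − t·(1−t)^{m−1})/(t^m − (1−t)^m). Let 𝓕^m_{B_1,B_2} = { x ∈ (0,1) irrational : a_n(x)·a_{n+1}(x)⋯a_{n+m−1}(x) ≥ B_1^n for infinitely many n ∈ ℕ, and a_{n+1}(x)·a_{n+2}(x)⋯a_{n+m−1}(x) < B_2^n for all sufficiently large n ∈ ℕ }. If B_1^{1/2} < B_2 < B_1^{θ_m}, then dim_H 𝓕^m_{B_1,B_2} = g_{B_1,B_2}. -/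

import Mathlib

open Filter MeasureTheory Set

/-- The Gauss map `T(x) = 1/x - ⌊1/x⌋`. -/
noncomputable def gaussMap (x : ℝ) : ℝ := 1 / x - (⌊1 / x⌋ : ℤ)

/-- The `n`-th partial quotient `a_n(x)` (for `n ≥ 1`) of the continued
fraction expansion of `x`: `a_n(x) = ⌊1 / T^{n-1}(x)⌋`. -/
noncomputable def pq (x : ℝ) (n : ℕ) : ℕ := ⌊1 / (gaussMap^[n - 1] x)⌋₊

/-- The continuant `q_n(a_1, …, a_n)`: `q_0 = 1`, `q_1 = a_1`,
`q_k = a_k q_{k-1} + q_{k-2}`. -/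
def contQ : (n : ℕ) → (Fin n → ℕ) → ℕ
  | 0, _ => 1
  | 1, a => a 0
  | (n + 2), a =>
      a (Fin.last (n + 1)) * contQ (n + 1) (Fin.init a) +
        contQ n (Fin.init (Fin.init a))

/-- `s_B`: the Wang–Wu pressure exponent. -/
noncomputable def sExp (B : ℝ) : ℝ :=
  sInf {s : ℝ | 0 ≤ s ∧
    Filter.atTop.limsup (fun n : ℕ =>
      (((n : ℝ)⁻¹ : ℝ) : EReal) * ENNReal.log (∑' a : Fin n → ℕ+,
        ENNReal.ofReal ((B ^ n * ((contQ n fun i => (a i : ℕ)) : ℝ) ^ 2) ^ (-s)))) ≤ 0}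

/-- `g_{B₁,B₂}`: the two-parameter pressure exponent. -/
noncomputable def gExp (B₁ B₂ : ℝ) : ℝ :=
  sInf {s : ℝ | 0 ≤ s ∧
    Filter.atTop.limsup (fun n : ℕ =>
      (((n : ℝ)⁻¹ : ℝ) : EReal) * ENNReal.log (∑' a : Fin n → ℕ+,
        ENNReal.ofReal (B₂ ^ ((1 - s) * (n : ℝ)) *
          (B₁ ^ n * ((contQ n fun i => (a i : ℕ)) : ℝ) ^ 2) ^ (-s)))) ≤ 0}

/-- The iterates `f_1(s) = s`, `f_{k+1}(s) = s f_k(s) / (1 - s + f_k(s))`;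
here `fIter s k = f_{k+1}(s)`, so `f_m(s) = fIter s (m - 1)`. -/
noncomputable def fIter (s : ℝ) : ℕ → ℝ
  | 0 => s
  | (k + 1) => s * fIter s k / (1 - s + fIter s k)

/-- `t_B^{(m)}`: the Huang–Wu–Xu pressure exponent. -/
noncomputable def tExpM (B : ℝ) (m : ℕ) : ℝ :=
  sInf {s : ℝ | 0 ≤ s ∧ s ≤ 1 ∧
    Filter.atTop.limsup (fun n : ℕ =>
      (((n : ℝ)⁻¹ : ℝ) : EReal) * ENNReal.log (∑' a : Fin n → ℕ+,
        ENNReal.ofReal (B ^ (-(n : ℝ) * fIter s (m - 1)) *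
          ((contQ n fun i => (a i : ℕ)) : ℝ) ^ (-(2 * s))))) ≤ 0}

/-!
Write `P(s)` for the exponential growth rate of `n ↦ ∑ q_n(a)^(-2s)` and `g = g_{B₁,B₂}`. The
exponent `g` is where the decreasing function `P` crosses `gRate s = s log B₁ - (1 - s) log B₂`.

Upper bound: a point of the set lies, for infinitely many `n`, in a set given by `n` free digits
`w`, then `m - 1` digits with product `π < B₂ⁿ`, then a digit at least `B₁ⁿ / π`. Such a set has
diameter at most `(B₁ⁿ q_n(w)² π)⁻¹`, and the `s`-th powers of these diameters have a finite sum as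
soon as `P(s) < gRate s`.

Lower bound: in a random continued fraction, let all digits be free and bounded, with words weighted
by `q^(-2s)`, except for very sparse positions `n` where the `k`-th of the following digits has size
about `exp (n (T (k + 1) - T k))`. The law of the digits satisfies Frostman's condition with
exponent `s` if `s T (k + 1) - (1 - s) T k < P(s)` for all `k`, and the points lie in the set if
`T m ≥ log B₁` and `T` increases by less than `log B₂` over any `m - 1` steps. A `T` growing as
fast as these constraints allow reaches `log B₁` after `m` steps when
`f_m(s) log B₁ ≤ gRate s < P(s)`. At `s = t` the bound `B₂ < B₁^θ_m` says exactly that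
`f_m(t) log B₁ < gRate t`. As `P` crosses `f_m log B₁` at `t`, this forces `g ≤ t`, and the
inequality persists from `t` down to `g`: the two rates cannot meet in between, since `P` lies above
`f_m log B₁` to the left of `t` and below `gRate` to the right of `g`.
-/

/-! ### Continuants -/

/-- The continuant `q_n` of the first `n` terms of an infinite sequence, indexed from `0`. -/
def continuant (a : ℕ → ℕ) (n : ℕ) : ℕ := contQ n fun i => a i

section Continuant

variable {a b : ℕ → ℕ}

@[simp]
lemma continuant_zero (a : ℕ → ℕ) : continuant a 0 = 1 := rfl

@[simp]
lemma continuant_one (a : ℕ → ℕ) : continuant a 1 = a 0 := rfl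

lemma continuant_add_two (a : ℕ → ℕ) (n : ℕ) :
    continuant a (n + 2) = a (n + 1) * continuant a (n + 1) + continuant a n := rfl

lemma continuant_congr {n : ℕ} (h : ∀ i < n, a i = b i) : continuant a n = continuant b n :=
  congrArg (contQ n) (funext fun i => h i i.isLt)

lemma contQ_eq_continuant {n : ℕ} {w : Fin n → ℕ} (h : ∀ i : Fin n, w i = a i) :
    contQ n w = continuant a n :=
  congrArg (contQ n) (funext h)

lemma one_le_continuant (ha : ∀ i, 1 ≤ a i) : ∀ n, 1 ≤ continuant a n
  | 0 => le_rfl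
  | 1 => ha 0
  | n + 2 => (one_le_continuant ha n).trans (Nat.le_add_left _ _)

lemma mul_continuant_le (a : ℕ → ℕ) (n : ℕ) : a n * continuant a n ≤ continuant a (n + 1) := by
  cases n with
  | zero => simp
  | succ n => exact Nat.le_add_right _ _

lemma continuant_le_succ (ha : ∀ i, 1 ≤ a i) (n : ℕ) : continuant a n ≤ continuant a (n + 1) :=
  (Nat.le_mul_of_pos_left _ (ha n)).trans (mul_continuant_le a n)

lemma continuant_succ_le (ha : ∀ i, 1 ≤ a i) (n : ℕ) :
    continuant a (n + 1) ≤ (a n + 1) * continuant a n := by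
  cases n with
  | zero => simp
  | succ n =>
    rw [continuant_add_two, add_mul, one_mul]
    gcongr
    exact continuant_le_succ ha n

lemma continuant_mul_prod_le (a : ℕ → ℕ) (n k : ℕ) :
    continuant a n * ∏ i ∈ Finset.range k, a (n + i) ≤ continuant a (n + k) := by
  induction k with
  | zero => simp
  | succ k ih =>
    calc continuant a n * ∏ i ∈ Finset.range (k + 1), a (n + i)
        = a (n + k) * (continuant a n * ∏ i ∈ Finset.range k, a (n + i)) := by
          rw [Finset.prod_range_succ]; ring
      _ ≤ a (n + k) * continuant a (n + k) := by gcongr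
      _ ≤ continuant a (n + (k + 1)) := mul_continuant_le a _

lemma continuant_add_le (ha : ∀ i, 1 ≤ a i) (n : ℕ) :
    ∀ k, continuant a (n + k) ≤ 2 * continuant a n * continuant (fun i => a (n + i)) k
  | 0 => by simp only [add_zero, continuant_zero]; lia
  | 1 => calc
      continuant a (n + 1) ≤ (a n + 1) * continuant a n := continuant_succ_le ha n
      _ ≤ (2 * a n) * continuant a n := by have := ha n; gcongr; lia
      _ = 2 * continuant a n * continuant (fun i => a (n + i)) 1 := by
        rw [continuant_one, add_zero]; ring
  | k + 2 => calc
      continuant a (n + (k + 2))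
        = a (n + (k + 1)) * continuant a (n + (k + 1)) + continuant a (n + k) := rfl
      _ ≤ a (n + (k + 1)) * (2 * continuant a n * continuant (fun i => a (n + i)) (k + 1)) +
          2 * continuant a n * continuant (fun i => a (n + i)) k := by
        gcongr
        exacts [continuant_add_le ha n (k + 1), continuant_add_le ha n k]
      _ = 2 * continuant a n * continuant (fun i => a (n + i)) (k + 2) := by
        rw [continuant_add_two]; ring

lemma two_pow_le_two_mul_continuant_sq (ha : ∀ i, 1 ≤ a i) :
    ∀ n, 2 ^ n ≤ 2 * continuant a n ^ 2
  | 0 => by simp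
  | 1 => by have := ha 0; simp only [continuant_one]; nlinarith
  | n + 2 => by
    have hdouble : 2 * continuant a n ≤ continuant a (n + 2) := by
      have h₁ := continuant_le_succ ha n
      have h₂ := Nat.le_mul_of_pos_left (continuant a (n + 1)) (ha (n + 1))
      rw [continuant_add_two]
      lia
    calc 2 ^ (n + 2) = 4 * 2 ^ n := by ring
      _ ≤ 4 * (2 * continuant a n ^ 2) := by gcongr; exact two_pow_le_two_mul_continuant_sq ha n
      _ = 2 * (2 * continuant a n) ^ 2 := by ring
      _ ≤ 2 * continuant a (n + 2) ^ 2 := by gcongr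

lemma tendsto_continuant_atTop (ha : ∀ i, 1 ≤ a i) :
    Tendsto (fun n => (continuant a n : ℝ)) atTop atTop := by
  have hsq : Tendsto (fun n => 2 * (continuant a n : ℝ) ^ 2) atTop atTop :=
    tendsto_atTop_mono (fun n => by exact_mod_cast two_pow_le_two_mul_continuant_sq ha n)
      (tendsto_pow_atTop_atTop_of_one_lt one_lt_two)
  refine tendsto_atTop.2 fun C => ?_
  filter_upwards [hsq.eventually_ge_atTop (2 * C ^ 2)] with n hn
  exact le_of_sq_le_sq (by linarith) (by positivity)

end Continuant

/-! ### Continued fraction expansions -/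

/-- `y` is the sequence of tails `y i = [a i, a (i + 1), …]` of an infinite continued fraction with
partial quotients `a`, so that `y 0` is its value. -/
structure IsContFrac (a : ℕ → ℕ) (y : ℕ → ℝ) : Prop where
  pos : ∀ i, 0 < y i
  lt_one : ∀ i, y i < 1
  one_le : ∀ i, 1 ≤ a i
  tail_mul : ∀ i, y i * (a i + y (i + 1)) = 1

namespace IsContFrac

variable {a a' : ℕ → ℕ} {y y' : ℕ → ℝ}

lemma prod_succ_mul (h : IsContFrac a y) (n : ℕ) :
    (∏ i ∈ Finset.range (n + 1), y i) *
      (continuant a (n + 1) + y (n + 1) * continuant a n) = 1 := by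
  induction n with
  | zero => simpa using h.tail_mul 0
  | succ n ih =>
    calc (∏ i ∈ Finset.range (n + 2), y i) *
          (continuant a (n + 2) + y (n + 2) * continuant a (n + 1))
        = (∏ i ∈ Finset.range (n + 1), y i) * (y (n + 1) * (a (n + 1) + y (n + 2)) *
            continuant a (n + 1) + y (n + 1) * continuant a n) := by
          rw [Finset.prod_range_succ, continuant_add_two]; push_cast; ring
      _ = 1 := by rw [h.tail_mul, one_mul, ih]

lemma prod_pos (h : IsContFrac a y) (n : ℕ) : 0 < ∏ i ∈ Finset.range n, y i :=
  Finset.prod_pos fun i _ => h.pos i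

lemma continuant_pos (h : IsContFrac a y) (n : ℕ) : (0 : ℝ) < continuant a n :=
  Nat.cast_pos.2 (one_le_continuant h.one_le n)

lemma prod_le (h : IsContFrac a y) (n : ℕ) :
    ∏ i ∈ Finset.range n, y i ≤ 1 / (continuant a n : ℝ) := by
  cases n with
  | zero => simp
  | succ n =>
    have hprod := h.prod_succ_mul n
    have hpos := mul_pos (h.prod_pos (n + 1)) (mul_pos (h.pos (n + 1)) (h.continuant_pos n))
    rw [le_div_iff₀ (h.continuant_pos _)]
    linarith

lemma le_prod (h : IsContFrac a y) (n : ℕ) :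
    1 / (2 * continuant a n : ℝ) ≤ ∏ i ∈ Finset.range n, y i := by
  cases n with
  | zero => norm_num
  | succ n =>
    have hle : y (n + 1) * continuant a n ≤ continuant a (n + 1) :=
      (mul_le_of_le_one_left (h.continuant_pos n).le (h.lt_one _).le).trans
        (Nat.cast_le.2 (continuant_le_succ h.one_le n))
    have := h.continuant_pos (n + 1)
    rw [div_le_iff₀ (by positivity), ← h.prod_succ_mul n]
    exact mul_le_mul_of_nonneg_left (by linarith) (h.prod_pos _).le

lemma dist_eq (h : IsContFrac a y) (h' : IsContFrac a' y') (n : ℕ) (hag : ∀ i < n, a i = a' i) :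
    |y 0 - y' 0| =
      |y n - y' n| * ((∏ i ∈ Finset.range n, y i) * ∏ i ∈ Finset.range n, y' i) := by
  induction n with
  | zero => simp
  | succ n ih =>
    have hstep : |y n - y' n| = |y (n + 1) - y' (n + 1)| * (y n * y' n) := by
      rw [← abs_of_pos (mul_pos (h.pos n) (h'.pos n)), ← abs_mul, abs_sub_comm]
      congr 1
      have h₁ := h.tail_mul n
      rw [hag n n.lt_succ_self] at h₁
      linear_combination y n * h'.tail_mul n - y' n * h₁
    rw [ih fun i hi => hag i (hi.trans n.lt_succ_self), Finset.prod_range_succ,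
      Finset.prod_range_succ, hstep]
    ring

lemma dist_le (h : IsContFrac a y) (h' : IsContFrac a' y') (n : ℕ) (hag : ∀ i < n, a i = a' i) :
    |y 0 - y' 0| ≤ |y n - y' n| / (continuant a n : ℝ) ^ 2 := by
  have hy' := h'.prod_le n
  rw [← continuant_congr hag] at hy'
  calc |y 0 - y' 0|
      = |y n - y' n| * ((∏ i ∈ Finset.range n, y i) * ∏ i ∈ Finset.range n, y' i) :=
        dist_eq h h' n hag
    _ ≤ |y n - y' n| * ((1 / (continuant a n : ℝ)) * (1 / (continuant a n : ℝ))) := by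
        gcongr
        exacts [(h'.prod_pos n).le, h.prod_le n]
    _ = |y n - y' n| / (continuant a n : ℝ) ^ 2 := by ring

lemma le_dist (h : IsContFrac a y) (h' : IsContFrac a' y') (n : ℕ) (hag : ∀ i < n, a i = a' i) :
    |y n - y' n| / (4 * (continuant a n : ℝ) ^ 2) ≤ |y 0 - y' 0| := by
  have hy' := h'.le_prod n
  rw [← continuant_congr hag] at hy'
  calc |y n - y' n| / (4 * (continuant a n : ℝ) ^ 2)
      = |y n - y' n| * ((1 / (2 * continuant a n : ℝ)) * (1 / (2 * continuant a n : ℝ))) := by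
        ring
    _ ≤ |y n - y' n| * ((∏ i ∈ Finset.range n, y i) * ∏ i ∈ Finset.range n, y' i) := by
        gcongr
        exacts [(h.prod_pos n).le, h.le_prod n]
    _ = |y 0 - y' 0| := (dist_eq h h' n hag).symm

lemma one_div_eq (h : IsContFrac a y) (i : ℕ) : 1 / y i = a i + y (i + 1) := by
  rw [div_eq_iff (h.pos i).ne', mul_comm, h.tail_mul]

lemma gaussMap_eq (h : IsContFrac a y) (i : ℕ) : gaussMap (y i) = y (i + 1) := by
  have hfloor : ⌊(a i : ℝ) + y (i + 1)⌋ = (a i : ℤ) := by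
    rw [Int.floor_eq_iff, Int.cast_natCast]
    constructor <;> linarith [h.pos (i + 1), h.lt_one (i + 1)]
  rw [gaussMap, h.one_div_eq, hfloor, Int.cast_natCast, add_sub_cancel_left]

lemma gaussMap_iterate (h : IsContFrac a y) (i : ℕ) : gaussMap^[i] (y 0) = y i := by
  induction i with
  | zero => rfl
  | succ i ih => rw [Function.iterate_succ_apply', ih, h.gaussMap_eq]

lemma pq_eq (h : IsContFrac a y) (i : ℕ) : pq (y 0) (i + 1) = a i := by
  have := h.pos (i + 1)
  rw [pq, Nat.add_sub_cancel, h.gaussMap_iterate, h.one_div_eq, Nat.floor_eq_iff (by positivity)]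
  constructor <;> linarith [h.lt_one (i + 1)]

-- If `y 0 = p / q`, then `q * (y 0 * ⋯ * y (n - 1))` is a positive integer for every `n`, but it
-- is at most `q / continuant a n`, which tends to `0`.
lemma irrational (h : IsContFrac a y) : Irrational (y 0) := by
  rintro ⟨r, hr⟩
  have hrec : ∀ n, ∏ i ∈ Finset.range (n + 2), y i =
      ∏ i ∈ Finset.range n, y i - a n * ∏ i ∈ Finset.range (n + 1), y i := fun n => by
    rw [Finset.prod_range_succ, Finset.prod_range_succ]
    linear_combination (∏ i ∈ Finset.range n, y i) * h.tail_mul n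
  have hinteger : ∀ n, ∃ k : ℤ, r.den * ∏ i ∈ Finset.range n, y i = k := by
    refine Nat.twoStepInduction ⟨r.den, by simp⟩ ⟨r.num, ?_⟩ fun n ⟨k, hk⟩ ⟨l, hl⟩ =>
      ⟨k - a n * l, ?_⟩
    · rw [Finset.prod_range_one, ← hr]
      exact_mod_cast Rat.den_mul_eq_num r
    · push_cast
      rw [hrec, ← hk, ← hl]
      ring
  have hden : (0 : ℝ) < r.den := Nat.cast_pos.2 r.den_pos
  obtain ⟨n, hn⟩ := ((tendsto_continuant_atTop h.one_le).eventually_gt_atTop (r.den : ℝ)).exists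
  obtain ⟨k, hk⟩ := hinteger n
  have hk_pos : (0 : ℝ) < k := hk ▸ mul_pos hden (h.prod_pos n)
  have hk_lt : (k : ℝ) < 1 := calc
    (k : ℝ) ≤ r.den * (1 / continuant a n) := hk ▸ mul_le_mul_of_nonneg_left (h.prod_le n) hden.le
    _ < 1 := by rwa [mul_one_div, div_lt_one (h.continuant_pos n)]
  norm_cast at hk_pos hk_lt
  lia

end IsContFrac

lemma gaussMap_mem_Ioo_and_irrational {x : ℝ} (hx : Irrational x) :
    gaussMap x ∈ Ioo (0 : ℝ) 1 ∧ Irrational (gaussMap x) := by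
  have hirr : Irrational (gaussMap x) := by
    rw [gaussMap, one_div]
    exact (irrational_inv_iff.2 hx).sub_intCast _
  have hnonneg : 0 ≤ gaussMap x := sub_nonneg.2 (Int.floor_le _)
  have hlt : gaussMap x < 1 := sub_lt_iff_lt_add'.2 (Int.lt_floor_add_one _)
  exact ⟨⟨hnonneg.lt_of_ne' hirr.ne_zero, hlt⟩, hirr⟩

lemma isContFrac_pq {x : ℝ} (hx : x ∈ Ioo (0 : ℝ) 1) (hirr : Irrational x) :
    IsContFrac (fun i => pq x (i + 1)) (fun i => gaussMap^[i] x) := by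
  have horbit : ∀ i, gaussMap^[i] x ∈ Ioo (0 : ℝ) 1 ∧ Irrational (gaussMap^[i] x) := fun i => by
    induction i with
    | zero => exact ⟨hx, hirr⟩
    | succ i ih =>
      rw [Function.iterate_succ_apply']
      exact gaussMap_mem_Ioo_and_irrational ih.2
  refine ⟨fun i => (horbit i).1.1, fun i => (horbit i).1.2, fun i => ?_, fun i => ?_⟩
  · obtain ⟨hpos, hlt⟩ := (horbit i).1
    rw [pq, Nat.add_sub_cancel, Nat.one_le_floor_iff, le_div_iff₀ hpos, one_mul]
    exact hlt.le
  · have hpos := (horbit i).1.1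
    simp only [pq, Nat.add_sub_cancel, Function.iterate_succ_apply']
    rw [natCast_floor_eq_intCast_floor (by positivity), gaussMap, add_sub_cancel,
      mul_one_div_cancel hpos.ne']

lemma exists_truncated_contFrac (n : ℕ) : ∀ {a : ℕ → ℕ}, (∀ i, 1 ≤ a i) →
    ∃ y : ℕ → ℝ, (∀ i, y i ∈ Icc (0 : ℝ) 1) ∧ ∀ i < n, y i * (a i + y (i + 1)) = 1 := by
  induction n with
  | zero => exact fun _ => ⟨fun _ => 0, fun _ => by simp, fun i hi => (Nat.not_lt_zero i hi).elim⟩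
  | succ n ih =>
    intro a ha
    obtain ⟨y, hy, hrel⟩ := ih fun i => ha (i + 1)
    have hone : (1 : ℝ) ≤ a 0 := Nat.one_le_cast.2 (ha 0)
    have hden : 1 ≤ (a 0 : ℝ) + y 0 := hone.trans (le_add_of_nonneg_right (hy 0).1)
    have hden_pos : 0 < (a 0 : ℝ) + y 0 := one_pos.trans_le hden
    refine ⟨fun i => Nat.casesOn i (1 / (a 0 + y 0)) y, fun i => ?_, fun i hi => ?_⟩
    · cases i with
      | zero => exact ⟨one_div_nonneg.2 hden_pos.le, div_le_one_of_le₀ hden hden_pos.le⟩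
      | succ i => exact hy i
    · cases i with
      | zero => exact one_div_mul_cancel hden_pos.ne'
      | succ i => exact hrel i (Nat.lt_of_succ_lt_succ hi)

-- Compactness of `[0, 1]^ℕ` turns the finite truncations into an infinite expansion.
lemma exists_isContFrac {a : ℕ → ℕ} (ha : ∀ i, 1 ≤ a i) : ∃ y, IsContFrac a y := by
  let K : ℕ → Set (ℕ → ℝ) := fun n =>
    univ.pi (fun _ => Icc (0 : ℝ) 1) ∩ {y | ∀ i < n, y i * (a i + y (i + 1)) = 1}
  have hclosed : ∀ n, IsClosed {y : ℕ → ℝ | ∀ i < n, y i * (a i + y (i + 1)) = 1} := fun n => by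
    simp only [ofPred_forall]
    exact isClosed_iInter fun i => isClosed_iInter fun _ =>
      isClosed_eq (by fun_prop) continuous_const
  have hcompact : ∀ n, IsCompact (K n) := fun n =>
    (isCompact_univ_pi fun _ => isCompact_Icc).inter_right (hclosed n)
  obtain ⟨y, hy⟩ : (⋂ n, K n).Nonempty := by
    refine IsCompact.nonempty_iInter_of_sequence_nonempty_isCompact_isClosed K
      (fun n y hy => ⟨hy.1, fun i hi => hy.2 i (hi.trans n.lt_succ_self)⟩) (fun n => ?_)
      (hcompact 0) fun n => (hcompact n).isClosed
    obtain ⟨y, hy, hrel⟩ := exists_truncated_contFrac n ha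
    exact ⟨y, fun i _ => hy i, hrel⟩
  rw [mem_iInter] at hy
  have hmem : ∀ i, y i ∈ Icc (0 : ℝ) 1 := fun i => (hy 0).1 i (mem_univ i)
  have hrel : ∀ i, y i * (a i + y (i + 1)) = 1 := fun i => (hy (i + 1)).2 i i.lt_succ_self
  have hpos : ∀ i, 0 < y i := fun i =>
    (hmem i).1.lt_of_ne' fun h0 => by simpa [h0] using hrel i
  refine ⟨y, hpos, fun i => ?_, ha, hrel⟩
  have hone : (1 : ℝ) ≤ a i := Nat.one_le_cast.2 (ha i)
  nlinarith [hpos i, hpos (i + 1), hrel i]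

/-! ### Pressure -/

section Pressure

open ExpGrowth

/-- The sum of `q_n(w)^{-2s}` over all words `w` of length `n`. -/
noncomputable def partitionSum (s : ℝ) (n : ℕ) : ENNReal :=
  ∑' w : Fin n → ℕ+, ENNReal.ofReal ((contQ n fun i => (w i : ℕ) : ℝ) ^ (-(2 * s)))

/-- The pressure of the potential `-s log |T'|` for the Gauss map `T`, as the exponential growth
rate of the partition sums. -/
noncomputable def pressure (s : ℝ) : EReal := expGrowthSup (partitionSum s)

/-- The rate `s log B₁ - (1 - s) log B₂` which the pressure crosses at `g_{B₁,B₂}`. -/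
noncomputable def gRate (B₁ B₂ s : ℝ) : ℝ := s * Real.log B₁ - (1 - s) * Real.log B₂

lemma exists_contQ_eq_continuant {n : ℕ} (w : Fin n → ℕ+) :
    ∃ a : ℕ → ℕ, (∀ i, 1 ≤ a i) ∧ contQ n (fun i => (w i : ℕ)) = continuant a n := by
  refine ⟨fun i => if h : i < n then w ⟨i, h⟩ else 1, fun i => ?_,
    contQ_eq_continuant fun i => by simp⟩
  by_cases h : i < n
  · simpa only [h, dite_true] using Nat.one_le_iff_ne_zero.2 (w ⟨i, h⟩).ne_zero
  · simp [h]

lemma one_le_contQ {n : ℕ} (w : Fin n → ℕ+) : 1 ≤ contQ n fun i => (w i : ℕ) := by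
  obtain ⟨a, ha, hw⟩ := exists_contQ_eq_continuant w
  exact hw ▸ one_le_continuant ha n

lemma two_pow_le_two_mul_contQ_sq {n : ℕ} (w : Fin n → ℕ+) :
    2 ^ n ≤ 2 * (contQ n fun i => (w i : ℕ)) ^ 2 := by
  obtain ⟨a, ha, hw⟩ := exists_contQ_eq_continuant w
  exact hw ▸ two_pow_le_two_mul_continuant_sq ha n

lemma expGrowthSup_ofReal_exp_mul (c : ℝ) (u : ℕ → ENNReal) :
    expGrowthSup (fun n => ENNReal.ofReal (Real.exp (c * n)) * u n) = c + expGrowthSup u := by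
  have hexp : (fun n : ℕ => ENNReal.ofReal (Real.exp (c * n))) =
      fun n : ℕ => EReal.exp ((c : EReal) * n) := by
    funext n
    rw [← EReal.exp_coe, EReal.coe_mul, EReal.coe_natCast]
  change expGrowthSup ((fun n : ℕ => ENNReal.ofReal (Real.exp (c * n))) * u) = _
  apply le_antisymm
  · refine (expGrowthSup_mul_le ?_ ?_).trans_eq ?_ <;> rw [hexp, expGrowthSup_exp] <;> simp
  · refine le_trans (le_of_eq ?_) le_expGrowthSup_mul'
    rw [hexp, expGrowthInf_exp]

lemma limsup_inv_mul_log_nonpos_iff {u v : ℕ → ENNReal} (c : ℝ)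
    (h : ∀ n, u n = ENNReal.ofReal (Real.exp (-c * n)) * v n) :
    limsup (fun n : ℕ => (((n : ℝ)⁻¹ : ℝ) : EReal) * ENNReal.log (u n)) atTop ≤ 0 ↔
      expGrowthSup v ≤ c := by
  have hu : limsup (fun n : ℕ => (((n : ℝ)⁻¹ : ℝ) : EReal) * ENNReal.log (u n)) atTop =
      expGrowthSup u := by
    refine congrArg (limsup · atTop) (funext fun n => ?_)
    rw [EReal.div_eq_inv_mul, EReal.coe_inv, EReal.coe_natCast]
  rw [hu, funext h, expGrowthSup_ofReal_exp_mul, add_comm, EReal.coe_neg, ← sub_eq_add_neg,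
    EReal.sub_nonpos]

lemma tExpM_eq_sInf {B : ℝ} (hB : 0 < B) (m : ℕ) :
    tExpM B m = sInf {s | 0 ≤ s ∧ s ≤ 1 ∧
      pressure s ≤ (fIter s (m - 1) * Real.log B : ℝ)} := by
  refine congrArg sInf (ext fun s => and_congr_right fun _ => and_congr_right fun _ =>
    limsup_inv_mul_log_nonpos_iff _ fun n => ?_)
  rw [partitionSum, ← ENNReal.tsum_mul_left]
  refine tsum_congr fun w => ?_
  rw [← ENNReal.ofReal_mul (Real.exp_pos _).le, Real.rpow_def_of_pos hB]
  ring_nf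

lemma gExp_eq_sInf {B₁ B₂ : ℝ} (hB₁ : 0 < B₁) (hB₂ : 0 < B₂) :
    gExp B₁ B₂ = sInf {s | 0 ≤ s ∧ pressure s ≤ gRate B₁ B₂ s} := by
  refine congrArg sInf (ext fun s => and_congr_right fun _ =>
    limsup_inv_mul_log_nonpos_iff _ fun n => ?_)
  rw [partitionSum, ← ENNReal.tsum_mul_left]
  refine tsum_congr fun w => ?_
  have hexp : B₂ ^ ((1 - s) * (n : ℝ)) * (B₁ ^ n) ^ (-s) = Real.exp (-gRate B₁ B₂ s * n) := by
    rw [Real.rpow_def_of_pos hB₂, Real.rpow_def_of_pos (pow_pos hB₁ n), Real.log_pow,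
      ← Real.exp_add, gRate]
    ring_nf
  have hq : ((contQ n fun i => (w i : ℕ) : ℝ) ^ 2) ^ (-s) =
      (contQ n fun i => (w i : ℕ) : ℝ) ^ (-(2 * s)) := by
    rw [← Real.rpow_natCast_mul (Nat.cast_nonneg _)]
    ring_nf
  rw [← ENNReal.ofReal_mul (Real.exp_pos _).le, Real.mul_rpow (by positivity) (by positivity),
    ← mul_assoc, hexp, hq]

lemma pressure_add_le {s s' : ℝ} (h : s ≤ s') :
    (((s' - s) * Real.log 2 : ℝ) : EReal) + pressure s' ≤ pressure s := by
  rw [pressure, ← expGrowthSup_ofReal_exp_mul]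
  refine expGrowthSup_le_of_eventually_le (b := ENNReal.ofReal (2 ^ (s' - s)))
    ENNReal.ofReal_ne_top (Eventually.of_forall fun n => ?_)
  rw [partitionSum, partitionSum, ← ENNReal.tsum_mul_left, ← ENNReal.tsum_mul_left]
  refine ENNReal.tsum_le_tsum fun w => ?_
  rw [← ENNReal.ofReal_mul (by positivity), ← ENNReal.ofReal_mul (by positivity)]
  refine ENNReal.ofReal_le_ofReal ?_
  have hq : (0 : ℝ) < contQ n fun i => (w i : ℕ) := by exact_mod_cast one_le_contQ w
  have hgrowth : (2 : ℝ) ^ n ≤ 2 * (contQ n fun i => (w i : ℕ) : ℝ) ^ 2 := by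
    exact_mod_cast two_pow_le_two_mul_contQ_sq w
  set q : ℝ := ((contQ n fun i => (w i : ℕ) : ℕ) : ℝ)
  calc Real.exp ((s' - s) * Real.log 2 * n) * q ^ (-(2 * s'))
      = ((2 : ℝ) ^ n) ^ (s' - s) * q ^ (-(2 * s')) := by
        rw [Real.rpow_def_of_pos (pow_pos two_pos n), Real.log_pow]
        ring_nf
    _ ≤ (2 * q ^ 2) ^ (s' - s) * q ^ (-(2 * s')) := by gcongr
    _ = 2 ^ (s' - s) * (q ^ (2 * (s' - s)) * q ^ (-(2 * s'))) := by
        rw [Real.mul_rpow zero_le_two (by positivity), ← Real.rpow_natCast_mul hq.le, mul_assoc,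
          Nat.cast_ofNat]
    _ = 2 ^ (s' - s) * q ^ (-(2 * s)) := by
        rw [← Real.rpow_add hq]
        ring_nf

lemma antitone_pressure : Antitone pressure := fun s s' h => by
  refine le_trans ?_ (pressure_add_le h)
  refine le_add_of_nonneg_left (EReal.coe_nonneg.2 ?_)
  exact mul_nonneg (sub_nonneg.2 h) (Real.log_nonneg one_le_two)

lemma gRate_sub_gRate (B₁ B₂ s s' : ℝ) :
    gRate B₁ B₂ s' - gRate B₁ B₂ s = (s' - s) * (Real.log B₁ + Real.log B₂) := by
  unfold gRate
  ring

lemma not_summable_inv_mul_natCast_add_two {D : ℝ} (hD : D ≠ 0) :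
    ¬ Summable fun k : ℕ => (((k + 2 : ℕ) : ℝ) * D)⁻¹ := by
  simp_rw [mul_inv]
  rw [summable_mul_right_iff (inv_ne_zero hD),
    summable_nat_add_iff (f := fun k : ℕ => (k : ℝ)⁻¹) 2]
  exact Real.not_summable_natCast_inv

-- The words `1 ⋯ 1 k` alone already contribute a harmonic series.
lemma partitionSum_succ_eq_top {s : ℝ} (hs : s ≤ 1 / 2) (n : ℕ) : partitionSum s (n + 1) = ⊤ := by
  let w : ℕ → Fin (n + 1) → ℕ+ := fun k => Fin.snoc (fun _ => 1) k.succPNat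
  have hinj : Function.Injective w := fun k l hkl => by
    simpa [w] using congrFun hkl (Fin.last n)
  let D : ℝ := continuant (fun _ => 1) n
  have hD : 0 < D := Nat.cast_pos.2 (one_le_continuant (fun _ => le_rfl) n)
  have hw : ∀ k, (contQ (n + 1) fun i => (w k i : ℕ) : ℝ) ≤ (k + 2 : ℕ) * D := fun k => by
    let a : ℕ → ℕ := fun i => if i = n then k + 1 else 1
    have ha : ∀ i, 1 ≤ a i := fun i => by dsimp only [a]; split_ifs <;> lia
    have hwa : ∀ i, (w k i : ℕ) = a i := fun i => by
      cases i using Fin.lastCases with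
      | last => simp [w, a]
      | cast i => simp [w, a, i.isLt.ne]
    have han : continuant a n = continuant (fun _ => 1) n :=
      continuant_congr fun i hi => if_neg hi.ne
    have hle := continuant_succ_le ha n
    rw [han, show a n = k + 1 from if_pos rfl, ← contQ_eq_continuant hwa] at hle
    calc (contQ (n + 1) fun i => (w k i : ℕ) : ℝ)
        ≤ ((k + 1 + 1) * continuant (fun _ => 1) n : ℕ) := Nat.cast_le.2 hle
      _ = (k + 2 : ℕ) * D := Nat.cast_mul _ _
  have hterm : ∀ k, ENNReal.ofReal (((k + 2 : ℕ) * D)⁻¹) ≤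
      ENNReal.ofReal ((contQ (n + 1) fun i => (w k i : ℕ) : ℝ) ^ (-(2 * s))) := fun k => by
    have hq : (1 : ℝ) ≤ contQ (n + 1) fun i => (w k i : ℕ) := by exact_mod_cast one_le_contQ (w k)
    refine ENNReal.ofReal_le_ofReal ((inv_anti₀ (by linarith) (hw k)).trans ?_)
    rw [← Real.rpow_neg_one]
    exact Real.rpow_le_rpow_of_exponent_le hq (by linarith)
  have hle := (ENNReal.tsum_le_tsum hterm).trans (ENNReal.tsum_comp_le_tsum_of_injective hinj
    fun v => ENNReal.ofReal ((contQ (n + 1) fun i => (v i : ℕ) : ℝ) ^ (-(2 * s))))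
  refine top_unique (le_trans (top_le_iff.2 ?_) hle)
  by_contra htop
  refine not_summable_inv_mul_natCast_add_two hD.ne' ((ENNReal.summable_toReal htop).congr
    fun k => ENNReal.toReal_ofReal (by positivity))

lemma pressure_eq_top {s : ℝ} (hs : s ≤ 1 / 2) : pressure s = ⊤ := by
  rw [pressure, ← expGrowthSup_top]
  refine expGrowthSup_congr ?_
  filter_upwards [eventually_ge_atTop 1] with n hn
  obtain ⟨k, rfl⟩ := Nat.exists_eq_add_of_le' hn
  exact partitionSum_succ_eq_top hs k

lemma half_lt_of_pressure_le {s c : ℝ} (h : pressure s ≤ c) : 1 / 2 < s := by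
  by_contra! hs
  exact absurd (pressure_eq_top hs ▸ h) (not_le.2 (EReal.coe_lt_top c))

lemma gRate_lt_gRate {B₁ B₂ s s' : ℝ} (hB₁ : 1 < B₁) (hB₂ : 1 < B₂) (h : s < s') :
    gRate B₁ B₂ s < gRate B₁ B₂ s' := by
  refine sub_pos.1 ?_
  rw [gRate_sub_gRate]
  exact mul_pos (sub_pos.2 h) (add_pos (Real.log_pos hB₁) (Real.log_pos hB₂))

lemma gExp_le {B₁ B₂ s : ℝ} (hB₁ : 0 < B₁) (hB₂ : 0 < B₂) (hs : 0 ≤ s)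
    (h : pressure s ≤ gRate B₁ B₂ s) : gExp B₁ B₂ ≤ s := by
  rw [gExp_eq_sInf hB₁ hB₂]
  exact csInf_le ⟨0, fun _ h => h.1⟩ ⟨hs, h⟩

lemma half_le_gExp {B₁ B₂ s : ℝ} (hB₁ : 0 < B₁) (hB₂ : 0 < B₂) (hs : 0 ≤ s)
    (h : pressure s ≤ gRate B₁ B₂ s) : 1 / 2 ≤ gExp B₁ B₂ := by
  rw [gExp_eq_sInf hB₁ hB₂]
  exact le_csInf ⟨s, hs, h⟩ fun _ h' => (half_lt_of_pressure_le h'.2).le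

lemma pressure_lt_gRate {B₁ B₂ s : ℝ} (hB₁ : 1 < B₁) (hB₂ : 1 < B₂) (hg : 0 < gExp B₁ B₂)
    (hs : gExp B₁ B₂ < s) : pressure s < gRate B₁ B₂ s := by
  rw [gExp_eq_sInf (by linarith) (by linarith)] at hg hs
  have hne : {s | 0 ≤ s ∧ pressure s ≤ gRate B₁ B₂ s}.Nonempty := by
    by_contra! hempty
    rw [hempty, Real.sInf_empty] at hg
    exact hg.false
  obtain ⟨s', ⟨-, hs'⟩, hlt⟩ := exists_lt_of_csInf_lt hne hs
  exact (antitone_pressure hlt.le).trans_lt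
    (hs'.trans_lt (EReal.coe_lt_coe_iff.2 (gRate_lt_gRate hB₁ hB₂ hlt)))

-- The strict decay `pressure_add_le` of the pressure makes the inequality strict at `g`.
lemma gRate_gExp_lt_pressure {B₁ B₂ s : ℝ} (hB₁ : 0 < B₁) (hB₂ : 0 < B₂) (hs₀ : 0 ≤ s)
    (hs : s < gExp B₁ B₂) : (gRate B₁ B₂ (gExp B₁ B₂) : EReal) < pressure s := by
  set g := gExp B₁ B₂
  have hcont : Continuous fun s' =>
      (s' - s) * Real.log 2 - (g - s') * (Real.log B₁ + Real.log B₂) := by fun_prop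
  have hpos : 0 < (g - s) * Real.log 2 - (g - g) * (Real.log B₁ + Real.log B₂) := by
    have := mul_pos (sub_pos.2 hs) (Real.log_pos one_lt_two)
    linarith
  have hnear : ∀ᶠ s' in nhdsWithin g (Iio g), s' ∈ Ioo s g ∧
      0 < (s' - s) * Real.log 2 - (g - s') * (Real.log B₁ + Real.log B₂) :=
    Eventually.and (Ioo_mem_nhdsLT hs)
      (nhdsWithin_le_nhds (hcont.continuousAt.eventually_const_lt hpos))
  obtain ⟨s', ⟨hss', hs'g⟩, hs'⟩ := hnear.exists
  have hrate : (gRate B₁ B₂ s' : EReal) ≤ pressure s' := by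
    by_contra! hlt
    exact (gExp_le hB₁ hB₂ (hs₀.trans hss'.le) hlt.le).not_gt hs'g
  calc (gRate B₁ B₂ g : EReal)
      < (((s' - s) * Real.log 2 : ℝ) : EReal) + (gRate B₁ B₂ s' : ℝ) := by
        rw [← EReal.coe_add, EReal.coe_lt_coe_iff]
        linarith [gRate_sub_gRate B₁ B₂ s' g]
    _ ≤ (((s' - s) * Real.log 2 : ℝ) : EReal) + pressure s' := by gcongr
    _ ≤ pressure s := pressure_add_le hss'.le

lemma eventually_partitionSum_le {s c : ℝ} (h : pressure s < c) :
    ∀ᶠ n : ℕ in atTop, partitionSum s n ≤ ENNReal.ofReal (Real.exp (c * n)) := by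
  simpa only [← EReal.exp_coe, EReal.coe_mul, EReal.coe_natCast] using eventually_le_exp h

lemma frequently_le_partitionSum {s c : ℝ} (h : c < pressure s) :
    ∃ᶠ n : ℕ in atTop, ENNReal.ofReal (Real.exp (c * n)) ≤ partitionSum s n := by
  simpa only [← EReal.exp_coe, EReal.coe_mul, EReal.coe_natCast] using frequently_exp_le h

end Pressure

/-! ### Upper bound -/

/-- The set `𝓕^m_{B₁,B₂}` whose dimension is computed. -/
def digitProductSet (m : ℕ) (B₁ B₂ : ℝ) : Set ℝ :=
  {x : ℝ | x ∈ Set.Ioo (0 : ℝ) 1 ∧ Irrational x ∧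
    {n : ℕ | B₁ ^ n ≤ ∏ i ∈ Finset.range m, (pq x (n + i) : ℝ)}.Infinite ∧
    (∀ᶠ n : ℕ in Filter.atTop,
      ∏ i ∈ Finset.range (m - 1), (pq x (n + 1 + i) : ℝ) < B₂ ^ n)}

lemma hausdorffMeasure_setOf_infinite_mem_eq_zero {X ι : Type*} [EMetricSpace X]
    [MeasurableSpace X] [BorelSpace X] [Countable ι] (U : ι → Set X) {s : ℝ} (hs : 0 < s)
    (hU : ∑' i, Metric.ediam (U i) ^ s ≠ ⊤) : μH[s] {x | {i | x ∈ U i}.Infinite} = 0 := by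
  have htail := ENNReal.tendsto_tsum_compl_atTop_zero hU
  refine le_antisymm ?_ zero_le
  rw [← htail.liminf_eq]
  refine Measure.hausdorffMeasure_le_liminf_tsum (ι := fun t : Finset ι => {i // i ∉ t}) s _
    (fun t => (∑' i : {i // i ∉ t}, Metric.ediam (U i) ^ s) ^ s⁻¹) ?_
    (fun t i => U i) (Eventually.of_forall fun t i => ?_) (Eventually.of_forall fun t x hx => ?_)
  · simpa [hs] using htail.ennrpow_const s⁻¹
  · rw [ENNReal.le_rpow_inv_iff hs]
    exact ENNReal.le_tsum (f := fun i : {i // i ∉ t} => Metric.ediam (U i) ^ s) i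
  · obtain ⟨i, hi, hit⟩ := hx.exists_notMem_finset t
    exact mem_iUnion.2 ⟨⟨i, hit⟩, hi⟩

lemma tsum_pi_prod_eq_pow {α : Type*} (f : α → ENNReal) (k : ℕ) :
    ∑' c : Fin k → α, ∏ i, f (c i) = (∑' j, f j) ^ k := by
  induction k with
  | zero => simp
  | succ k ih =>
    rw [← (Fin.consEquiv fun _ : Fin (k + 1) => α).tsum_eq, ENNReal.tsum_prod', pow_succ',
      ← ENNReal.tsum_mul_right]
    refine tsum_congr fun j => ?_
    rw [← ih, ← ENNReal.tsum_mul_left]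
    refine tsum_congr fun c => ?_
    rw [Fin.prod_univ_succ]
    simp [Fin.consEquiv]

lemma tsum_ofReal_prod_rpow_ne_top {r : ℝ} (hr : r < -1) (k : ℕ) :
    ∑' c : Fin k → ℕ+, ENNReal.ofReal ((∏ i, (c i : ℝ)) ^ r) ≠ ⊤ := by
  have hprod : ∀ c : Fin k → ℕ+, ENNReal.ofReal ((∏ i, (c i : ℝ)) ^ r) =
      ∏ i, ENNReal.ofReal ((c i : ℝ) ^ r) := fun c => by
    rw [← Real.finsetProd_rpow _ _ fun i _ => Nat.cast_nonneg _,
      ENNReal.ofReal_prod_of_nonneg fun i _ => Real.rpow_nonneg (Nat.cast_nonneg _) _]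
  simp_rw [hprod]
  rw [tsum_pi_prod_eq_pow fun j : ℕ+ => ENNReal.ofReal ((j : ℝ) ^ r)]
  exact ENNReal.pow_ne_top
    ((Real.summable_nat_rpow.2 hr).comp_injective PNat.coe_injective).tsum_ofReal_ne_top

lemma IsContFrac.dist_le_of_le_digit {a b : ℕ → ℕ} {y z : ℕ → ℝ} (hy : IsContFrac a y)
    (hz : IsContFrac b z) {n k : ℕ} (hab : ∀ i < n + k, a i = b i) {R P : ℝ} (hR : 0 < R)
    (hP : ∏ i ∈ Finset.range k, (a (n + i) : ℝ) = P) (ha : R ≤ P * a (n + k))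
    (hb : R ≤ P * b (n + k)) :
    |y 0 - z 0| ≤ (R * (continuant a n : ℝ) ^ 2)⁻¹ * P⁻¹ := by
  have hP₀ : 0 < P := hP ▸ Finset.prod_pos fun i _ => Nat.cast_pos.2 (hy.one_le _)
  have hq : (0 : ℝ) < continuant a n := Nat.cast_pos.2 (one_le_continuant hy.one_le n)
  have hQ : (continuant a n : ℝ) * P ≤ continuant a (n + k) := by
    rw [← hP]
    exact_mod_cast continuant_mul_prod_le a n k
  have htail : ∀ {d : ℕ → ℕ} {w : ℕ → ℝ}, IsContFrac d w → R ≤ P * d (n + k) →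
      w (n + k) ≤ P / R := fun {d w} hw hd => by
    rw [le_div_iff₀ hR]
    calc w (n + k) * R ≤ w (n + k) * (P * (d (n + k) + w (n + k + 1))) := by
          have := hw.pos (n + k + 1)
          exact mul_le_mul_of_nonneg_left (hd.trans (by gcongr; linarith)) (hw.pos _).le
      _ = P * (w (n + k) * (d (n + k) + w (n + k + 1))) := by ring
      _ = P := by rw [hw.tail_mul, mul_one]
  have hdist : |y (n + k) - z (n + k)| ≤ P / R := abs_sub_le_iff.2
    ⟨by linarith [htail hy ha, hz.pos (n + k)], by linarith [htail hz hb, hy.pos (n + k)]⟩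
  calc |y 0 - z 0| ≤ |y (n + k) - z (n + k)| / (continuant a (n + k)) ^ 2 :=
        hy.dist_le hz _ hab
    _ ≤ (P / R) / (continuant a n * P) ^ 2 := by gcongr
    _ = (R * (continuant a n : ℝ) ^ 2)⁻¹ * P⁻¹ := by field_simp

section Cover

variable {k n : ℕ} {B₁ B₂ s ε x : ℝ} {w : Fin n → ℕ+} {c : Fin k → ℕ+}

/-- The points of `(0, 1)` whose expansion starts with the word `w` of length `n` followed by the
word `c`, whose product is less than `B₂ ^ n`, and then by a digit that raises this product to at
least `B₁ ^ n`. -/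
def coverSet (B₁ B₂ : ℝ) (w : Fin n → ℕ+) (c : Fin k → ℕ+) : Set ℝ :=
  {x : ℝ | x ∈ Ioo 0 1 ∧ Irrational x ∧ (∀ i : Fin n, pq x (i + 1) = w i) ∧
    (∀ i : Fin k, pq x (n + i + 1) = c i) ∧
    B₁ ^ n ≤ (∏ i, (c i : ℝ)) * pq x (n + k + 1) ∧ ∏ i, (c i : ℝ) < B₂ ^ n}

lemma exists_mem_coverSet (hB₁ : 1 ≤ B₁) (hx : x ∈ Ioo (0 : ℝ) 1) (hirr : Irrational x)
    (h₁ : B₁ ^ (n + 1) ≤ ∏ i ∈ Finset.range (k + 1), (pq x (n + 1 + i) : ℝ))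
    (h₂ : ∏ i ∈ Finset.range k, (pq x (n + 1 + i) : ℝ) < B₂ ^ n) :
    ∃ (w : Fin n → ℕ+) (c : Fin k → ℕ+), x ∈ coverSet B₁ B₂ w c := by
  have hpos : ∀ i, 0 < pq x (i + 1) := (isContFrac_pq hx hirr).one_le
  simp only [add_right_comm n 1] at h₁ h₂
  rw [Finset.prod_range_succ, Finset.prod_range] at h₁
  rw [Finset.prod_range] at h₂
  exact ⟨fun i => ⟨_, hpos i⟩, fun i => ⟨_, hpos (n + i)⟩, hx, hirr, fun _ => rfl, fun _ => rfl,
    (pow_le_pow_right₀ hB₁ n.le_succ).trans h₁, h₂⟩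

lemma ediam_coverSet_le (hB₁ : 0 < B₁) (B₂ : ℝ) (w : Fin n → ℕ+) (c : Fin k → ℕ+) :
    Metric.ediam (coverSet B₁ B₂ w c) ≤ ENNReal.ofReal
      ((B₁ ^ n * (contQ n fun i => (w i : ℕ) : ℝ) ^ 2)⁻¹ * (∏ i, (c i : ℝ))⁻¹) := by
  refine Metric.ediam_le fun x ⟨hx, hirr, hw, hc, hx₁, _⟩ z ⟨hz, hirr', hw', hc', hz₁, _⟩ => ?_
  rw [edist_dist, Real.dist_eq]
  refine ENNReal.ofReal_le_ofReal ?_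
  rw [contQ_eq_continuant (a := fun i => pq x (i + 1)) fun i => (hw i).symm]
  refine (isContFrac_pq hx hirr).dist_le_of_le_digit (isContFrac_pq hz hirr') (k := k) ?_
    (pow_pos hB₁ n) ?_ hx₁ hz₁
  · intro i hi
    obtain hin | ⟨j, rfl⟩ := (lt_or_ge i n).imp_right Nat.exists_eq_add_of_le
    · exact (hw ⟨i, hin⟩).trans (hw' ⟨i, hin⟩).symm
    · exact (hc ⟨j, by lia⟩).trans (hc' ⟨j, by lia⟩).symm
  · rw [Finset.prod_range]
    exact Finset.prod_congr rfl fun i _ => congrArg Nat.cast (hc i)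

lemma rpow_mul_inv_le {q P : ℝ} (hB₁ : 0 < B₁) (hq : 0 < q) (hP : 0 < P)
    (hPB : P ≤ B₂ ^ n) (hsε : s ≤ 1 + ε) :
    ((B₁ ^ n * q ^ 2)⁻¹ * P⁻¹) ^ s ≤
      Real.exp (-(gRate B₁ B₂ s - ε * Real.log B₂) * n) * (q ^ (-(2 * s)) * P ^ (-(1 + ε))) := by
  have hlogP : Real.log P ≤ n * Real.log B₂ :=
    (Real.log_le_log hP hPB).trans_eq (Real.log_pow _ _)
  rw [← mul_inv, Real.inv_rpow (by positivity), ← Real.rpow_neg (by positivity),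
    Real.rpow_def_of_pos (by positivity), Real.log_mul (by positivity) hP.ne',
    Real.log_mul (by positivity) (by positivity), Real.log_pow, Real.log_pow,
    Real.rpow_def_of_pos hq, Real.rpow_def_of_pos hP, ← Real.exp_add, ← Real.exp_add, gRate,
    Real.exp_le_exp]
  push_cast
  linarith [mul_le_mul_of_nonneg_left hlogP (sub_nonneg.2 hsε)]

lemma ediam_coverSet_rpow_le (hB₁ : 0 < B₁) (hs : 0 < s) (hsε : s ≤ 1 + ε)
    (B₂ : ℝ) (w : Fin n → ℕ+) (c : Fin k → ℕ+) :
    Metric.ediam (coverSet B₁ B₂ w c) ^ s ≤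
      ENNReal.ofReal (Real.exp (-(gRate B₁ B₂ s - ε * Real.log B₂) * n)) *
        (ENNReal.ofReal ((contQ n fun i => (w i : ℕ) : ℝ) ^ (-(2 * s))) *
          ENNReal.ofReal ((∏ i, (c i : ℝ)) ^ (-(1 + ε)))) := by
  obtain hempty | ⟨-, -, -, -, -, -, hc⟩ := (coverSet B₁ B₂ w c).eq_empty_or_nonempty
  · simp [hempty, hs]
  have hq : (0 : ℝ) < contQ n fun i => (w i : ℕ) := by exact_mod_cast one_le_contQ w
  have hP : (0 : ℝ) < ∏ i, (c i : ℝ) := Finset.prod_pos fun i _ => Nat.cast_pos.2 (c i).pos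
  refine (ENNReal.rpow_le_rpow (ediam_coverSet_le hB₁ B₂ w c) hs.le).trans ?_
  rw [ENNReal.ofReal_rpow_of_nonneg (by positivity) hs.le, ← ENNReal.ofReal_mul (by positivity),
    ← ENNReal.ofReal_mul (by positivity)]
  exact ENNReal.ofReal_le_ofReal (rpow_mul_inv_le hB₁ hq hP hc.le hsε)

lemma tsum_ediam_coverSet_rpow_le (hB₁ : 0 < B₁) (hs : 0 < s) (hsε : s ≤ 1 + ε)
    (B₂ : ℝ) (k n : ℕ) :
    ∑' p : (Fin n → ℕ+) × (Fin k → ℕ+), Metric.ediam (coverSet B₁ B₂ p.1 p.2) ^ s ≤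
      ENNReal.ofReal (Real.exp (-(gRate B₁ B₂ s - ε * Real.log B₂) * n)) *
        (partitionSum s n * ∑' c : Fin k → ℕ+, ENNReal.ofReal ((∏ i, (c i : ℝ)) ^ (-(1 + ε)))) := by
  have hle := ENNReal.tsum_le_tsum fun p : (Fin n → ℕ+) × (Fin k → ℕ+) =>
    ediam_coverSet_rpow_le hB₁ hs hsε B₂ p.1 p.2
  refine hle.trans_eq ?_
  rw [ENNReal.tsum_mul_left, ENNReal.tsum_prod', partitionSum, ← ENNReal.tsum_mul_right]
  simp_rw [ENNReal.tsum_mul_left]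

lemma exists_tsum_ediam_coverSet_ne_top (hB₁ : 0 < B₁) (hB₂ : 1 < B₂) (hs₀ : 0 < s) (hs₁ : s < 1)
    (h : pressure s < gRate B₁ B₂ s) (k : ℕ) :
    ∃ N : ℕ, ∑' p : Σ n : ℕ, (Fin (N + n) → ℕ+) × (Fin k → ℕ+),
      Metric.ediam (coverSet B₁ B₂ p.2.1 p.2.2) ^ s ≠ ⊤ := by
  obtain ⟨r, hr, hrg⟩ := EReal.lt_iff_exists_real_btwn.1 h
  have hlog := Real.log_pos hB₂
  have hδ : 0 < gRate B₁ B₂ s - r := sub_pos.2 (EReal.coe_lt_coe_iff.1 hrg)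
  set δ := (gRate B₁ B₂ s - r) / 2 with hδ_def
  set ε := δ / Real.log B₂ with hε_def
  have hε : 0 < ε := by positivity
  have hrate : gRate B₁ B₂ s - ε * Real.log B₂ = r + δ := by
    rw [hε_def, div_mul_cancel₀ _ hlog.ne', hδ_def]
    ring
  set Z := ∑' c : Fin k → ℕ+, ENNReal.ofReal ((∏ i, (c i : ℝ)) ^ (-(1 + ε)))
  have hZ : Z ≠ ⊤ := tsum_ofReal_prod_rpow_ne_top (by linarith) k
  obtain ⟨N, hN⟩ := eventually_atTop.1 (eventually_partitionSum_le hr)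
  have hlevel : ∀ n, N ≤ n → ∑' p : (Fin n → ℕ+) × (Fin k → ℕ+),
      Metric.ediam (coverSet B₁ B₂ p.1 p.2) ^ s ≤
        ENNReal.ofReal (Real.exp (n * -δ)) * Z := fun n hn =>
    calc _ ≤ ENNReal.ofReal (Real.exp (-(r + δ) * n)) * (partitionSum s n * Z) :=
          hrate ▸ tsum_ediam_coverSet_rpow_le hB₁ hs₀ (by linarith) B₂ k n
      _ ≤ ENNReal.ofReal (Real.exp (-(r + δ) * n)) *
          (ENNReal.ofReal (Real.exp (r * n)) * Z) := by gcongr; exact hN n hn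
      _ = _ := by
          rw [← mul_assoc, ← ENNReal.ofReal_mul (Real.exp_pos _).le, ← Real.exp_add]
          ring_nf
  have hsum : ∑' n : ℕ, ENNReal.ofReal (Real.exp (n * -δ)) ≠ ⊤ :=
    (Real.summable_exp_nat_mul_iff.2 (by linarith : -δ < 0)).tsum_ofReal_ne_top
  refine ⟨N, ne_top_of_le_ne_top (ENNReal.mul_ne_top hsum hZ) ?_⟩
  rw [ENNReal.tsum_sigma', ← ENNReal.tsum_mul_right]
  calc _ ≤ ∑' n : ℕ, ENNReal.ofReal (Real.exp ((N + n : ℕ) * -δ)) * Z :=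
        ENNReal.tsum_le_tsum fun n => hlevel (N + n) (N.le_add_right n)
    _ ≤ _ := ENNReal.tsum_comp_le_tsum_of_injective (add_right_injective N)
        fun n : ℕ => ENNReal.ofReal (Real.exp (n * -δ)) * Z

lemma infinite_setOf_mem_coverSet {m : ℕ} (hm : m ≠ 0) (hB₁ : 1 ≤ B₁)
    (hx : x ∈ digitProductSet m B₁ B₂) (N : ℕ) :
    {p : Σ n : ℕ, (Fin (N + n) → ℕ+) × (Fin (m - 1) → ℕ+) |
      x ∈ coverSet B₁ B₂ p.2.1 p.2.2}.Infinite := by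
  obtain ⟨k, rfl⟩ := Nat.exists_eq_succ_of_ne_zero hm
  obtain ⟨hx₀, hirr, hinf, hev⟩ := hx
  refine Infinite.of_image Sigma.fst (Nat.frequently_atTop_iff_infinite.1 ?_)
  have hfreq : ∃ᶠ n in atTop, x ∈ {x : ℝ | B₁ ^ (N + n + 1) ≤
      ∏ i ∈ Finset.range (k + 1), (pq x (N + n + 1 + i) : ℝ)} := by
    refine frequently_atTop.2 fun K => ?_
    obtain ⟨n, hn, hKn⟩ := hinf.exists_gt (N + K)
    refine ⟨n - N - 1, by lia, ?_⟩
    rwa [mem_ofPred_eq, show N + (n - N - 1) + 1 = n by lia]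
  refine (hfreq.and_eventually ((tendsto_add_atTop_nat N).eventually hev)).mono
    fun n ⟨hn, hn'⟩ => ?_
  rw [add_comm n N] at hn'
  obtain ⟨w, c, hwc⟩ := exists_mem_coverSet hB₁ hx₀ hirr hn hn'
  exact ⟨⟨n, w, c⟩, hwc, rfl⟩

end Cover

lemma dimH_digitProductSet_le_of_pressure_lt {m : ℕ} (hm : m ≠ 0) {B₁ B₂ s : ℝ} (hB₁ : 1 < B₁)
    (hB₂ : 1 < B₂) (hs₀ : 0 < s) (hs₁ : s < 1) (h : pressure s < gRate B₁ B₂ s) :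
    dimH (digitProductSet m B₁ B₂) ≤ ENNReal.ofReal s := by
  obtain ⟨N, hN⟩ := exists_tsum_ediam_coverSet_ne_top (by linarith) hB₂ hs₀ hs₁ h (m - 1)
  have hzero := measure_mono_null
    (fun x hx => infinite_setOf_mem_coverSet hm hB₁.le hx N)
    (hausdorffMeasure_setOf_infinite_mem_eq_zero _ hs₀ hN)
  refine dimH_le_of_hausdorffMeasure_ne_top ?_
  rw [Real.coe_toNNReal s hs₀.le, hzero]
  exact ENNReal.zero_ne_top

lemma dimH_digitProductSet_le_gExp {m : ℕ} (hm : m ≠ 0) {B₁ B₂ : ℝ} (hB₁ : 1 < B₁)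
    (hB₂ : 1 < B₂) (hg₀ : 0 < gExp B₁ B₂) (hg₁ : gExp B₁ B₂ < 1) :
    dimH (digitProductSet m B₁ B₂) ≤ ENNReal.ofReal (gExp B₁ B₂) := by
  refine ge_of_tendsto ((ENNReal.continuous_ofReal.tendsto _).mono_left
    (nhdsWithin_le_nhds (s := Ioi (gExp B₁ B₂)))) ?_
  filter_upwards [Ioo_mem_nhdsGT hg₁] with s hs
  exact dimH_digitProductSet_le_of_pressure_lt hm hB₁ hB₂ (hg₀.trans hs.1) hs.2
    (pressure_lt_gRate hB₁ hB₂ hg₀ hs.1)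

/-! ### Mass distribution -/

lemma le_dimH_image_of_measure_preimage_le {Ω X : Type*} [MeasurableSpace Ω] [EMetricSpace X]
    (P : Measure Ω) {E : Set Ω} (hE : P E ≠ 0) {f : Ω → X} {C s : NNReal}
    (h : ∀ U : Set X, P (E ∩ f ⁻¹' U) ≤ C * Metric.ediam U ^ (s : ℝ)) :
    (s : ENNReal) ≤ dimH (f '' E) := by
  borelize X
  have hC : C ≠ 0 := by
    rintro rfl
    exact hE (le_antisymm (by simpa using h univ) zero_le)
  have hle : OuterMeasure.map f (OuterMeasure.restrict E P.toOuterMeasure) ≤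
      C • OuterMeasure.mkMetric fun r => r ^ (s : ℝ) := by
    rw [← OuterMeasure.mkMetric_nnreal_smul _ hC]
    refine OuterMeasure.le_mkMetric _ _ ⊤ ENNReal.zero_lt_top fun U _ => ?_
    rw [OuterMeasure.map_apply, OuterMeasure.restrict_apply, inter_comm]
    exact h U
  refine le_dimH_of_hausdorffMeasure_ne_zero fun h₀ => hE ?_
  have hEf := hle (f '' E)
  rw [OuterMeasure.map_apply, OuterMeasure.restrict_apply,
    inter_eq_self_of_subset_right (subset_preimage_image f E), smul_apply,
    OuterMeasure.coe_mkMetric, Measure.coe_toOuterMeasure] at hEf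
  rw [Measure.hausdorffMeasure] at h₀
  rw [h₀, smul_zero] at hEf
  exact le_antisymm hEf zero_le

lemma infinitePi_le_prod_mul {α : Type*} [MeasurableSpace α] [DiscreteMeasurableSpace α]
    (μ : ℕ → Measure α) [∀ i, IsProbabilityMeasure (μ i)] {S : Set (ℕ → α)} {ω₀ : ℕ → α} {N : ℕ}
    {B : Set α} (hS : ∀ ω ∈ S, (∀ i < N, ω i = ω₀ i) ∧ ω N ∈ B) :
    Measure.infinitePi μ S ≤ (∏ i ∈ Finset.range N, μ i {ω₀ i}) * μ N B := by
  classical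
  have hsub : S ⊆ Set.pi (Finset.range (N + 1) : Finset ℕ)
      fun i => if i < N then {ω₀ i} else B := fun ω hω i hi => by
    obtain ⟨hagree, hB⟩ := hS ω hω
    obtain hlt | rfl := Nat.lt_succ_iff_lt_or_eq.1 (Finset.mem_range.1 (Finset.mem_coe.1 hi))
    · simp [hlt, hagree i hlt]
    · simpa using hB
  calc Measure.infinitePi μ S ≤ _ := measure_mono hsub
    _ = (∏ i ∈ Finset.range N, μ i (if i < N then {ω₀ i} else B)) * μ N B := by
      rw [Measure.infinitePi_pi _ fun i _ => MeasurableSet.of_discrete, Finset.prod_range_succ,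
        if_neg (lt_irrefl N)]
    _ = _ := by
      congr 1
      exact Finset.prod_congr rfl fun i hi => by rw [if_pos (Finset.mem_range.1 hi)]

lemma ae_infinitePi_forall_mem {ι α : Type*} [Countable ι] [MeasurableSpace α]
    {μ : ι → Measure α} [∀ i, IsProbabilityMeasure (μ i)] {W : ι → Set α}
    (h : ∀ i, ∀ᵐ w ∂μ i, w ∈ W i) : ∀ᵐ ω ∂Measure.infinitePi μ, ∀ i, ω i ∈ W i :=
  ae_all_iff.2 fun i => (measurePreserving_eval_infinitePi μ i).quasiMeasurePreserving.ae (h i)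

section WeightedMeasure

variable {α : Type*} [MeasurableSpace α]

/-- The measure on the finite set `W` giving mass `p w` to the point `w`. -/
noncomputable def weightedMeasure (W : Finset α) (p : α → ℝ) : Measure α :=
  ∑ w ∈ W, ENNReal.ofReal (p w) • Measure.dirac w

variable [DiscreteMeasurableSpace α] (W : Finset α) {p : α → ℝ}

lemma weightedMeasure_apply (p : α → ℝ) (B : Set α) [DecidablePred (· ∈ B)] :
    weightedMeasure W p B = ∑ w ∈ W with w ∈ B, ENNReal.ofReal (p w) := by
  rw [weightedMeasure, Measure.finsetSum_apply, Finset.sum_filter]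
  refine Finset.sum_congr rfl fun w _ => ?_
  rw [Measure.smul_apply, Measure.dirac_apply' _ MeasurableSet.of_discrete]
  by_cases hw : w ∈ B <;> simp [hw]

lemma weightedMeasure_singleton_le (p : α → ℝ) (w : α) :
    weightedMeasure W p {w} ≤ ENNReal.ofReal (p w) := by
  classical
  rw [weightedMeasure_apply]
  refine (Finset.sum_le_sum_of_subset (t := {w}) fun v hv => ?_).trans_eq (Finset.sum_singleton _ _)
  exact Finset.mem_singleton.2 (Finset.mem_filter.1 hv).2

lemma ae_weightedMeasure_mem (p : α → ℝ) : ∀ᵐ w ∂weightedMeasure W p, w ∈ W := by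
  classical
  rw [ae_iff, weightedMeasure_apply, Finset.filter_false_of_mem fun w hw h => h hw,
    Finset.sum_empty]

lemma isProbabilityMeasure_weightedMeasure (hp : ∀ w ∈ W, 0 ≤ p w) (hsum : ∑ w ∈ W, p w = 1) :
    IsProbabilityMeasure (weightedMeasure W p) := ⟨by
  classical
  rw [weightedMeasure_apply, Finset.filter_true_of_mem fun _ _ => mem_univ _,
    ← ENNReal.ofReal_sum_of_nonneg hp, hsum, ENNReal.ofReal_one]⟩

end WeightedMeasure

lemma le_rpow_of_mul_rpow_le_one {G Q x s : ℝ} (hG : 0 ≤ G) (hQ : 0 ≤ Q) (hx : 0 ≤ x) (hs : 0 ≤ s)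
    (hGQ : G * Q ^ (2 * s) ≤ 1) (hxQ : 1 ≤ x * Q ^ 2) : G ≤ x ^ s := by
  have hone : 1 ≤ x ^ s * Q ^ (2 * s) := by
    have := Real.one_le_rpow hxQ hs
    rwa [Real.mul_rpow hx (sq_nonneg Q), ← Real.rpow_natCast, ← Real.rpow_mul hQ] at this
  calc G ≤ G * (x ^ s * Q ^ (2 * s)) := le_mul_of_one_le_right hG hone
    _ = G * Q ^ (2 * s) * x ^ s := by ring
    _ ≤ 1 * x ^ s := by gcongr
    _ = x ^ s := one_mul _

/-! ### Digits of prescribed exponential size -/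

/-- The least integer at least `e ^ (x (T (k + 1) - T k))`. Choosing the `k`-th digit of a block in
`[digitSize T x k, 2 * digitSize T x k)` makes the product of the first `k` digits comparable to
`e ^ (x * T k)` when `T 0 = 0`. -/
noncomputable def digitSize (T : ℕ → ℝ) (x : ℝ) (k : ℕ) : ℕ :=
  ⌈Real.exp (x * (T (k + 1) - T k))⌉₊

section DigitSize

variable {T : ℕ → ℝ} {x : ℝ}

lemma exp_le_digitSize (T : ℕ → ℝ) (x : ℝ) (k : ℕ) :
    Real.exp (x * (T (k + 1) - T k)) ≤ digitSize T x k := Nat.le_ceil _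

lemma digitSize_pos (T : ℕ → ℝ) (x : ℝ) (k : ℕ) : 0 < digitSize T x k :=
  Nat.ceil_pos.2 (Real.exp_pos _)

lemma digitSize_le (hT : Monotone T) (hx : 0 ≤ x) (k : ℕ) :
    (digitSize T x k : ℝ) ≤ 2 * Real.exp (x * (T (k + 1) - T k)) := by
  have hone : 1 ≤ Real.exp (x * (T (k + 1) - T k)) :=
    Real.one_le_exp (mul_nonneg hx (sub_nonneg.2 (hT k.le_succ)))
  have := Nat.ceil_lt_add_one (Real.exp_pos (x * (T (k + 1) - T k))).le
  rw [digitSize]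
  linarith

lemma prod_range_exp (T : ℕ → ℝ) (x : ℝ) (k r : ℕ) :
    ∏ j ∈ Finset.range r, Real.exp (x * (T (k + j + 1) - T (k + j))) =
      Real.exp (x * (T (k + r) - T k)) := by
  rw [← Real.exp_sum, ← Finset.mul_sum]
  exact congrArg (fun y => Real.exp (x * y)) (Finset.sum_range_sub (fun j => T (k + j)) r)

lemma prod_digitSize_le (hT : Monotone T) (hx : 0 ≤ x) (k r : ℕ) :
    ∏ j ∈ Finset.range r, (digitSize T x (k + j) : ℝ) ≤
      2 ^ r * Real.exp (x * (T (k + r) - T k)) := by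
  calc ∏ j ∈ Finset.range r, (digitSize T x (k + j) : ℝ)
      ≤ ∏ j ∈ Finset.range r, 2 * Real.exp (x * (T (k + j + 1) - T (k + j))) :=
        Finset.prod_le_prod (fun _ _ => Nat.cast_nonneg _) fun j _ => digitSize_le hT hx _
    _ = 2 ^ r * Real.exp (x * (T (k + r) - T k)) := by
        rw [Finset.prod_mul_distrib, Finset.prod_const, Finset.card_range, prod_range_exp]

/-- The product of the first `k` digit sizes. -/
noncomputable def digitSizeProd (T : ℕ → ℝ) (x : ℝ) (k : ℕ) : ℝ :=
  ∏ j ∈ Finset.range k, (digitSize T x j : ℝ)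

lemma digitSizeProd_succ (T : ℕ → ℝ) (x : ℝ) (k : ℕ) :
    digitSizeProd T x (k + 1) = digitSizeProd T x k * digitSize T x k :=
  Finset.prod_range_succ _ _

lemma digitSizeProd_pos (T : ℕ → ℝ) (x : ℝ) (k : ℕ) : 0 < digitSizeProd T x k :=
  Finset.prod_pos fun j _ => Nat.cast_pos.2 (digitSize_pos T x j)

lemma exp_le_digitSizeProd (hT₀ : T 0 = 0) (x : ℝ) (k : ℕ) :
    Real.exp (x * T k) ≤ digitSizeProd T x k := by
  have hprod := prod_range_exp T x 0 k
  simp only [zero_add, hT₀, sub_zero] at hprod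
  rw [← hprod]
  exact Finset.prod_le_prod (fun _ _ => (Real.exp_pos _).le) fun j _ => exp_le_digitSize T x j

lemma digitSizeProd_le (hT : Monotone T) (hT₀ : T 0 = 0) (hx : 0 ≤ x) (k : ℕ) :
    digitSizeProd T x k ≤ 2 ^ k * Real.exp (x * T k) := by
  simpa only [digitSizeProd, zero_add, hT₀, sub_zero] using prod_digitSize_le hT hx 0 k

lemma rpow_le_mul_exp {y c z p : ℝ} (hy : Real.exp z ≤ y) (hyc : y ≤ c * Real.exp z)
    (hp : p ≤ 1) : y ^ p ≤ c * Real.exp (p * z) := by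
  have hone : 1 ≤ y / Real.exp z := (one_le_div (Real.exp_pos z)).2 hy
  calc y ^ p = (y / Real.exp z) ^ p * Real.exp z ^ p := by
        rw [← Real.mul_rpow (zero_le_one.trans hone) (Real.exp_pos z).le,
          div_mul_cancel₀ _ (Real.exp_pos z).ne']
    _ ≤ (y / Real.exp z) ^ (1 : ℝ) * Real.exp z ^ p := by gcongr
    _ ≤ c * Real.exp z ^ p := by
        rw [Real.rpow_one]
        gcongr
        exact (div_le_iff₀ (Real.exp_pos z)).2 hyc
    _ = c * Real.exp (p * z) := by rw [← Real.exp_mul, mul_comm z]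

lemma digitSizeProd_rpow_mul_digitSize_rpow_le (hT : Monotone T) (hT₀ : T 0 = 0) (hx : 0 ≤ x)
    {s V : ℝ} (hs : s ≤ 1) {k : ℕ} (hV : s * T (k + 1) - (1 - s) * T k ≤ V) :
    digitSizeProd T x k ^ (2 * s - 1) * (digitSize T x k : ℝ) ^ s ≤
      2 ^ (k + 1) * Real.exp (x * V) := by
  have hprod := rpow_le_mul_exp (p := 2 * s - 1) (exp_le_digitSizeProd hT₀ x k)
    (digitSizeProd_le hT hT₀ hx k) (by linarith)
  have hsize := rpow_le_mul_exp (exp_le_digitSize T x k) (digitSize_le hT hx k) hs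
  calc digitSizeProd T x k ^ (2 * s - 1) * (digitSize T x k : ℝ) ^ s
      ≤ (2 ^ k * Real.exp ((2 * s - 1) * (x * T k))) *
          (2 * Real.exp (s * (x * (T (k + 1) - T k)))) := by gcongr
    _ = 2 ^ (k + 1) * Real.exp (x * (s * T (k + 1) - (1 - s) * T k)) := by
        rw [mul_mul_mul_comm, ← pow_succ, ← Real.exp_add]
        ring_nf
    _ ≤ 2 ^ (k + 1) * Real.exp (x * V) := by gcongr

end DigitSize

/-! ### Sparse sets of blocks -/

/-- A sequence multiplied by `q` at each step, except at the steps in `J`, where it is reset to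
`1`. -/
def resetPow (J : Set ℕ) [DecidablePred (· ∈ J)] (q : ℝ) : ℕ → ℝ
  | 0 => 1
  | N + 1 => if N ∈ J then 1 else resetPow J q N * q

section ResetPow

variable {J : Set ℕ} [DecidablePred (· ∈ J)] {q : ℝ}

lemma resetPow_succ_of_mem {N : ℕ} (hN : N ∈ J) : resetPow J q (N + 1) = 1 := if_pos hN

lemma resetPow_succ_of_notMem {N : ℕ} (hN : N ∉ J) :
    resetPow J q (N + 1) = resetPow J q N * q := if_neg hN

lemma resetPow_pos (hq : 0 < q) (N : ℕ) : 0 < resetPow J q N := by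
  induction N with
  | zero => exact one_pos
  | succ N ih => by_cases hN : N ∈ J <;> simp [resetPow, hN, ih, hq]

lemma resetPow_le_one (hq : 0 < q) (hq₁ : q ≤ 1) (N : ℕ) : resetPow J q N ≤ 1 := by
  induction N with
  | zero => exact le_rfl
  | succ N ih =>
    by_cases hN : N ∈ J
    · exact (resetPow_succ_of_mem hN).le
    · rw [resetPow_succ_of_notMem hN]
      exact mul_le_one₀ ih hq.le hq₁

lemma resetPow_add_le (hq : 0 < q) (hq₁ : q ≤ 1) {N k : ℕ} (hJ : ∀ i < k, N + i ∉ J) :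
    resetPow J q (N + k) ≤ q ^ k := by
  induction k with
  | zero => exact resetPow_le_one hq hq₁ N
  | succ k ih =>
    rw [← add_assoc, resetPow_succ_of_notMem (hJ k k.lt_succ_self), pow_succ]
    exact mul_le_mul_of_nonneg_right (ih fun i hi => hJ i (hi.trans k.lt_succ_self)) hq.le

end ResetPow

lemma add_notMem_range_pow {K : ℕ} (hK : 2 ≤ K) {j i : ℕ} (hi : i < K ^ (j + 1) - (K ^ j + 1)) :
    K ^ j + 1 + i ∉ range fun l : ℕ => K ^ (l + 1) := by
  rintro ⟨l, hl : K ^ (l + 1) = K ^ j + 1 + i⟩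
  have hlow : j < l + 1 := (Nat.pow_lt_pow_iff_right hK).1 (by omega)
  have hhigh : l + 1 < j + 1 := (Nat.pow_lt_pow_iff_right hK).1 (by omega)
  omega

lemma two_mul_eight_pow_le_exp {L : ℕ} (hL : 0 < L) : (2 : ℝ) * 8 ^ L ≤ Real.exp (4 * L) := by
  have htwo : 2 ≤ Real.exp 1 := by linarith [Real.add_one_le_exp (1 : ℝ)]
  calc (2 : ℝ) * 8 ^ L ≤ 2 ^ L * 8 ^ L := by
        gcongr
        exact le_self_pow₀ one_le_two hL.ne'
    _ = (2 ^ 4) ^ L := by rw [← mul_pow]; norm_num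
    _ ≤ (Real.exp 1 ^ 4) ^ L := by gcongr
    _ = Real.exp (4 * L) := by
        rw [← Real.exp_nat_mul, ← Real.exp_nat_mul]
        push_cast
        ring_nf

open Classical in
lemma exists_sparse_set {L : ℕ} (hL : 0 < L) {V₀ V₁ : ℝ} (hV₀ : 0 < V₀) (hV₁ : V₀ < V₁) :
    ∃ J : Set ℕ, J.Infinite ∧ (∀ i ∈ J, i + 1 ∉ J) ∧ ∀ N ∈ J,
      resetPow J (Real.exp (-(V₁ * L))) N * (2 * 8 ^ L * Real.exp ((L * N + 1) * V₀)) ≤ 1 := by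
  obtain ⟨K, hK⟩ := exists_nat_gt (max 2 (2 * (V₁ + V₀ + 4) / (V₁ - V₀)))
  have hK₂ : 2 < K := by exact_mod_cast (max_lt_iff.1 hK).1
  have hKV : 2 * (V₁ + V₀ + 4) < K * (V₁ - V₀) :=
    (div_lt_iff₀ (sub_pos.2 hV₁)).1 (max_lt_iff.1 hK).2
  have hL₁ : (1 : ℝ) ≤ L := by exact_mod_cast hL
  refine ⟨range fun l : ℕ => K ^ (l + 1), ?_, ?_, ?_⟩
  · exact infinite_range_of_injective
      ((Nat.pow_right_injective hK₂.le).comp (add_left_injective 1))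
  · rintro _ ⟨j, rfl⟩ ⟨l, hl : K ^ (l + 1) = K ^ (j + 1) + 1⟩
    have hdvd : K ∣ 1 := (Nat.dvd_add_right (dvd_pow_self K j.succ_ne_zero)).1
      (hl ▸ dvd_pow_self K l.succ_ne_zero)
    exact absurd (Nat.le_of_dvd one_pos hdvd) (by omega)
  · rintro _ ⟨j, rfl⟩
    have hlt : K ^ j + 1 ≤ K ^ (j + 1) := Nat.pow_lt_pow_right (by omega) j.lt_succ_self
    have hreset := resetPow_add_le (Real.exp_pos (-(V₁ * L)))
      (Real.exp_le_one_iff.2 (by nlinarith))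
      fun i (hi : i < K ^ (j + 1) - (K ^ j + 1)) => add_notMem_range_pow hK₂.le hi
    rw [Nat.add_sub_cancel' hlt, ← Real.exp_nat_mul, Nat.cast_sub hlt] at hreset
    push_cast at hreset ⊢
    have hx : (1 : ℝ) ≤ (K : ℝ) ^ j := one_le_pow₀ (by exact_mod_cast (by omega : 1 ≤ K))
    simp only [pow_succ] at hreset ⊢
    set x : ℝ := (K : ℝ) ^ j
    refine (mul_le_mul hreset (mul_le_mul_of_nonneg_right (two_mul_eight_pow_le_exp hL)
      (Real.exp_pos _).le) (by positivity) (Real.exp_pos _).le).trans ?_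
    rw [← Real.exp_add, ← Real.exp_add, Real.exp_le_one_iff]
    have hgap : V₁ * x + V₁ + V₀ + 4 ≤ x * K * (V₁ - V₀) := by nlinarith
    nlinarith

/-! ### The measure on sequences of blocks -/

lemma continuant_add_le_mul_prod {a : ℕ → ℕ} (ha : ∀ i, 1 ≤ a i) {n k : ℕ} {b : ℕ → ℝ}
    (hb : ∀ j < k, (a (n + j) + 1 : ℝ) ≤ b j) :
    (continuant a (n + k) : ℝ) ≤ continuant a n * ∏ j ∈ Finset.range k, b j := by
  induction k with
  | zero => simp
  | succ k ih =>
    have hstep : (continuant a (n + k + 1) : ℝ) ≤ (a (n + k) + 1) * continuant a (n + k) := by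
      exact_mod_cast continuant_succ_le ha (n + k)
    have hbk := hb k k.lt_succ_self
    have hbk₀ : 0 ≤ b k := by linarith [(a (n + k)).cast_nonneg (α := ℝ)]
    calc (continuant a (n + (k + 1)) : ℝ) ≤ (a (n + k) + 1) * continuant a (n + k) := hstep
      _ ≤ b k * (continuant a n * ∏ j ∈ Finset.range k, b j) := by
        gcongr
        exact ih fun j hj => hb j (hj.trans k.lt_succ_self)
      _ = continuant a n * ∏ j ∈ Finset.range (k + 1), b j := by
        rw [Finset.prod_range_succ]
        ring

lemma rpow_two_mul_le_sq {c s : ℝ} (hc : 1 ≤ c) (hs : s ≤ 1) : c ^ (2 * s) ≤ c ^ 2 := by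
  rw [← Real.rpow_natCast c 2]
  exact Real.rpow_le_rpow_of_exponent_le hc (by push_cast; linarith)

/-- Parameters of a random continued fraction made of blocks of `L` digits. The blocks with index
in `J` are big: their `k`-th digit has size about `exp (x (T (k + 1) - T k))`, where `x` is the
position of the first digit of the block, counted from `1`. The other blocks are free words with
digits at most `M`, chosen with probability proportional to the `-2s`-th power of their
continuant. -/
structure BlockScheme where
  L : ℕ
  M : ℕ
  s : ℝ
  V₀ : ℝ
  V₁ : ℝ
  T : ℕ → ℝ
  J : Set ℕ
  decidableMem : DecidablePred (· ∈ J)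
  L_pos : 0 < L
  one_le_M : 1 ≤ M
  s_pos : 0 < s
  s_lt_one : s < 1
  V₁_nonneg : 0 ≤ V₁
  monotone_T : Monotone T
  T_zero : T 0 = 0
  le_V₀ : ∀ k, s * T (k + 1) - (1 - s) * T k ≤ V₀
  le_sum : 4 * Real.exp (V₁ * L) ≤
    ∑ w ∈ Fintype.piFinset fun _ : Fin L => Finset.Icc 1 M, (contQ L w : ℝ) ^ (-(2 * s))
  sparse : ∀ N ∈ J, resetPow J (Real.exp (-(V₁ * L))) N *
    (2 * 8 ^ L * Real.exp ((L * N + 1) * V₀)) ≤ 1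

namespace BlockScheme

attribute [instance] decidableMem

variable (D : BlockScheme)

/-- The position, counted from `1`, of the first digit of the block `i`. -/
noncomputable def start (i : ℕ) : ℝ := D.L * i + 1

lemma start_nonneg (i : ℕ) : 0 ≤ D.start i := by
  unfold start
  positivity

/-- The possible values of the block `i`. -/
noncomputable def words (i : ℕ) : Finset (Fin D.L → ℕ) :=
  if i ∈ D.J then
    Fintype.piFinset fun k : Fin D.L =>
      Finset.Ico (digitSize D.T (D.start i) k) (2 * digitSize D.T (D.start i) k)
  else Fintype.piFinset fun _ => Finset.Icc 1 D.M

/-- The normalizing constant of the law of a free block. -/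
noncomputable def freeMass : ℝ :=
  ∑ w ∈ Fintype.piFinset fun _ : Fin D.L => Finset.Icc 1 D.M, (contQ D.L w : ℝ) ^ (-(2 * D.s))

/-- The probability that the block `i` equals `w`, for `w ∈ D.words i`. -/
noncomputable def weight (i : ℕ) (w : Fin D.L → ℕ) : ℝ :=
  if i ∈ D.J then (digitSizeProd D.T (D.start i) D.L)⁻¹
  else (contQ D.L w : ℝ) ^ (-(2 * D.s)) / D.freeMass

lemma freeMass_pos : 0 < D.freeMass := lt_of_lt_of_le (by positivity) D.le_sum

lemma weight_nonneg (i : ℕ) (w : Fin D.L → ℕ) : 0 ≤ D.weight i w := by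
  have := D.freeMass_pos
  have := digitSizeProd_pos D.T (D.start i) D.L
  unfold weight
  split_ifs <;> positivity

lemma prod_weight_nonneg (ω : ℕ → Fin D.L → ℕ) (N : ℕ) :
    0 ≤ ∏ i ∈ Finset.range N, D.weight i (ω i) :=
  Finset.prod_nonneg fun i _ => D.weight_nonneg i (ω i)

lemma sum_weight (i : ℕ) : ∑ w ∈ D.words i, D.weight i w = 1 := by
  unfold words weight
  split_ifs
  · rw [Finset.sum_const, Fintype.card_piFinset, nsmul_eq_mul, digitSizeProd, Finset.prod_range]
    simp only [Nat.card_Ico, two_mul, Nat.add_sub_cancel, Nat.cast_prod]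
    exact mul_inv_cancel₀ (Finset.prod_pos fun k _ => Nat.cast_pos.2 (digitSize_pos _ _ _)).ne'
  · rw [← Finset.sum_div]
    exact div_self D.freeMass_pos.ne'

/-- The law of the block `i`. -/
noncomputable def blockMeasure (i : ℕ) : Measure (Fin D.L → ℕ) :=
  weightedMeasure (D.words i) (D.weight i)

instance (i : ℕ) : IsProbabilityMeasure (D.blockMeasure i) :=
  isProbabilityMeasure_weightedMeasure _ (fun w _ => D.weight_nonneg i w) (D.sum_weight i)

/-- The law of the sequence of blocks, which are independent. -/
noncomputable def measure : Measure (ℕ → Fin D.L → ℕ) := Measure.infinitePi D.blockMeasure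

/-- The sequences of blocks with positive probabilities. -/
def paths : Set (ℕ → Fin D.L → ℕ) := {ω | ∀ i, ω i ∈ D.words i}

lemma measure_paths_ne_zero : D.measure D.paths ≠ 0 := by
  have hae : ∀ᵐ ω ∂D.measure, ω ∈ D.paths :=
    ae_infinitePi_forall_mem fun i => ae_weightedMeasure_mem (D.words i) (D.weight i)
  have : IsProbabilityMeasure D.measure := by
    unfold measure
    infer_instance
  have huniv : D.measure D.paths = D.measure univ := measure_congr (eventuallyEq_univ.2 hae)
  rw [huniv, measure_univ]
  exact one_ne_zero

lemma measure_le_of_agree {S : Set (ℕ → Fin D.L → ℕ)} {ω₁ : ℕ → Fin D.L → ℕ} {N : ℕ}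
    {B : Set (Fin D.L → ℕ)} (hS : ∀ ω ∈ S, (∀ i < N, ω i = ω₁ i) ∧ ω N ∈ B) :
    D.measure S ≤
      ENNReal.ofReal (∏ i ∈ Finset.range N, D.weight i (ω₁ i)) * D.blockMeasure N B := by
  refine (infinitePi_le_prod_mul D.blockMeasure hS).trans ?_
  rw [ENNReal.ofReal_prod_of_nonneg fun i _ => D.weight_nonneg i (ω₁ i)]
  gcongr
  exact weightedMeasure_singleton_le _ _ _

/-- The sequence of digits of a sequence of blocks, indexed from `0`. -/
def digit (ω : ℕ → Fin D.L → ℕ) (q : ℕ) : ℕ := ω (q / D.L) ⟨q % D.L, Nat.mod_lt _ D.L_pos⟩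

lemma digit_mul_add (ω : ℕ → Fin D.L → ℕ) (N : ℕ) {k : ℕ} (hk : k < D.L) :
    D.digit ω (D.L * N + k) = ω N ⟨k, hk⟩ := by
  simp only [digit, Nat.mul_add_div D.L_pos, Nat.div_eq_of_lt hk, add_zero, Nat.mul_add_mod,
    Nat.mod_eq_of_lt hk]

lemma contQ_eq_continuant_digit (ω : ℕ → Fin D.L → ℕ) (N : ℕ) :
    contQ D.L (ω N) = continuant (fun k => D.digit ω (D.L * N + k)) D.L :=
  contQ_eq_continuant fun k => (D.digit_mul_add ω N k.2).symm

variable {D} {ω : ℕ → Fin D.L → ℕ}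

lemma digit_mem_Ico (hω : ω ∈ D.paths) {N k : ℕ} (hN : N ∈ D.J) (hk : k < D.L) :
    D.digit ω (D.L * N + k) ∈
      Finset.Ico (digitSize D.T (D.start N) k) (2 * digitSize D.T (D.start N) k) := by
  have hmem := hω N
  rw [words, if_pos hN, Fintype.mem_piFinset] at hmem
  rw [D.digit_mul_add ω N hk]
  exact hmem ⟨k, hk⟩

lemma digit_mem_Icc (hω : ω ∈ D.paths) {N k : ℕ} (hN : N ∉ D.J) (hk : k < D.L) :
    D.digit ω (D.L * N + k) ∈ Finset.Icc 1 D.M := by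
  have hmem := hω N
  rw [words, if_neg hN, Fintype.mem_piFinset] at hmem
  rw [D.digit_mul_add ω N hk]
  exact hmem ⟨k, hk⟩

lemma digit_add_one_le (hω : ω ∈ D.paths) {N k : ℕ} (hN : N ∈ D.J) (hk : k < D.L) :
    (D.digit ω (D.L * N + k) : ℝ) + 1 ≤ 2 * digitSize D.T (D.start N) k := by
  exact_mod_cast (Finset.mem_Ico.1 (digit_mem_Ico hω hN hk)).2

lemma digit_le (hω : ω ∈ D.paths) {N k : ℕ} (hN : N ∉ D.J) (hk : k < D.L) :
    (D.digit ω (D.L * N + k) : ℝ) ≤ D.M := by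
  exact_mod_cast (Finset.mem_Icc.1 (digit_mem_Icc hω hN hk)).2

lemma one_le_digit (hω : ω ∈ D.paths) (q : ℕ) : 1 ≤ D.digit ω q := by
  have hk : q % D.L < D.L := Nat.mod_lt _ D.L_pos
  rw [← Nat.div_add_mod q D.L]
  by_cases hN : q / D.L ∈ D.J
  · exact (digitSize_pos _ _ _).trans_le (Finset.mem_Ico.1 (digit_mem_Ico hω hN hk)).1
  · exact (Finset.mem_Icc.1 (digit_mem_Icc hω hN hk)).1

lemma digit_le_or_two_le {ω' : ℕ → Fin D.L → ℕ} (hω : ω ∈ D.paths) (hω' : ω' ∈ D.paths) (q : ℕ) :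
    D.digit ω q ≤ D.M ∧ D.digit ω' q ≤ D.M ∨ 2 ≤ D.digit ω q ∧ 2 ≤ D.digit ω' q := by
  have hk : q % D.L < D.L := Nat.mod_lt _ D.L_pos
  rw [← Nat.div_add_mod q D.L]
  by_cases hN : q / D.L ∈ D.J
  · have h₁ := Finset.mem_Ico.1 (digit_mem_Ico hω hN hk)
    have h₂ := Finset.mem_Ico.1 (digit_mem_Ico hω' hN hk)
    have hM := D.one_le_M
    omega
  · exact Or.inl ⟨(Finset.mem_Icc.1 (digit_mem_Icc hω hN hk)).2,
      (Finset.mem_Icc.1 (digit_mem_Icc hω' hN hk)).2⟩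

lemma continuant_digit_pos (hω : ω ∈ D.paths) (q : ℕ) : (0 : ℝ) < continuant (D.digit ω) q :=
  Nat.cast_pos.2 (one_le_continuant (one_le_digit hω) q)

lemma continuant_le_of_mem (hω : ω ∈ D.paths) {N k : ℕ} (hN : N ∈ D.J) (hk : k ≤ D.L) :
    (continuant (D.digit ω) (D.L * N + k) : ℝ) ≤
      continuant (D.digit ω) (D.L * N) * (2 ^ k * digitSizeProd D.T (D.start N) k) := by
  refine (continuant_add_le_mul_prod (one_le_digit hω)
    fun j hj => digit_add_one_le hω hN (hj.trans_le hk)).trans_eq ?_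
  rw [Finset.prod_mul_distrib, Finset.prod_const, Finset.card_range, digitSizeProd]

lemma continuant_le_of_notMem (hω : ω ∈ D.paths) {N k : ℕ} (hN : N ∉ D.J) (hk : k ≤ D.L) :
    (continuant (D.digit ω) (D.L * N + k) : ℝ) ≤
      continuant (D.digit ω) (D.L * N) * (D.M + 1) ^ k := by
  refine (continuant_add_le_mul_prod (one_le_digit hω) (b := fun _ => D.M + 1)
    fun j hj => by linarith [digit_le hω hN (hj.trans_le hk)]).trans_eq ?_
  rw [Finset.prod_const, Finset.card_range]

variable (D) in
/-- The bound obtained for the probability of a cylinder of `N` blocks, multiplied by the `2s`-th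
power of its continuant. -/
noncomputable def cylinderGain (N : ℕ) : ℝ := resetPow D.J (Real.exp (-(D.V₁ * D.L))) N

lemma cylinderGain_pos (N : ℕ) : 0 < D.cylinderGain N := resetPow_pos (Real.exp_pos _) N

lemma cylinderGain_le_one (N : ℕ) : D.cylinderGain N ≤ 1 :=
  resetPow_le_one (Real.exp_pos _)
    (Real.exp_le_one_iff.2 (neg_nonpos.2 (mul_nonneg D.V₁_nonneg (Nat.cast_nonneg _)))) N

lemma weight_mul_rpow_le_of_mem (hω : ω ∈ D.paths) {N : ℕ} (hN : N ∈ D.J) :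
    D.weight N (ω N) * (continuant (D.digit ω) (D.L * (N + 1)) : ℝ) ^ (2 * D.s) ≤
      continuant (D.digit ω) (D.L * N) ^ (2 * D.s) *
        (2 * 8 ^ D.L * Real.exp (D.start N * D.V₀)) := by
  have hs := D.s_pos
  have hgrow : (continuant (D.digit ω) (D.L * (N + 1)) : ℝ) ≤ _ :=
    continuant_le_of_mem hω hN le_rfl
  have hprod : digitSizeProd D.T (D.start N) D.L ^ (2 * D.s - 1) ≤ _ :=
    (le_mul_of_one_le_right (Real.rpow_nonneg (digitSizeProd_pos _ _ _).le _)
      (Real.one_le_rpow (by exact_mod_cast digitSize_pos D.T (D.start N) D.L) hs.le)).trans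
    (digitSizeProd_rpow_mul_digitSize_rpow_le D.monotone_T D.T_zero (D.start_nonneg N)
      D.s_lt_one.le (D.le_V₀ D.L))
  have hR := digitSizeProd_pos D.T (D.start N) D.L
  have htwo := rpow_two_mul_le_sq (one_le_pow₀ one_le_two : (1 : ℝ) ≤ 2 ^ D.L) D.s_lt_one.le
  set Q : ℝ := (continuant (D.digit ω) (D.L * N) : ℝ)
  set R := digitSizeProd D.T (D.start N) D.L with hR_def
  rw [weight, if_pos hN, ← hR_def]
  calc R⁻¹ * (continuant (D.digit ω) (D.L * (N + 1)) : ℝ) ^ (2 * D.s)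
      ≤ R⁻¹ * (Q * (2 ^ D.L * R)) ^ (2 * D.s) := by gcongr
    _ = Q ^ (2 * D.s) * (((2 : ℝ) ^ D.L) ^ (2 * D.s) * R ^ (2 * D.s - 1)) := by
      rw [Real.mul_rpow (Nat.cast_nonneg _) (by positivity), Real.mul_rpow (by positivity) hR.le,
        Real.rpow_sub_one hR.ne']
      ring
    _ ≤ Q ^ (2 * D.s) *
        (((2 : ℝ) ^ D.L) ^ 2 * (2 ^ (D.L + 1) * Real.exp (D.start N * D.V₀))) := by gcongr
    _ = Q ^ (2 * D.s) * (2 * 8 ^ D.L * Real.exp (D.start N * D.V₀)) := by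
      rw [show (8 : ℝ) ^ D.L = (2 ^ D.L) ^ 3 by rw [← pow_mul, mul_comm, pow_mul]; norm_num]
      ring

lemma weight_mul_rpow_le_of_notMem (hω : ω ∈ D.paths) {N : ℕ} (hN : N ∉ D.J) :
    D.weight N (ω N) * (continuant (D.digit ω) (D.L * (N + 1)) : ℝ) ^ (2 * D.s) ≤
      continuant (D.digit ω) (D.L * N) ^ (2 * D.s) * Real.exp (-(D.V₁ * D.L)) := by
  have hs := D.s_pos
  have hZ := D.freeMass_pos
  have hgrow : (continuant (D.digit ω) (D.L * (N + 1)) : ℝ) ≤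
      2 * continuant (D.digit ω) (D.L * N) * contQ D.L (ω N) := by
    rw [D.contQ_eq_continuant_digit]
    exact_mod_cast continuant_add_le (one_le_digit hω) (D.L * N) D.L
  have hq : (0 : ℝ) < contQ D.L (ω N) := by
    rw [D.contQ_eq_continuant_digit]
    exact_mod_cast one_le_continuant (fun k => one_le_digit hω _) D.L
  have htwo := rpow_two_mul_le_sq one_le_two D.s_lt_one.le
  have hQ := continuant_digit_pos hω (D.L * N)
  set Q : ℝ := (continuant (D.digit ω) (D.L * N) : ℝ)
  set q : ℝ := (contQ D.L (ω N) : ℝ) with hq_def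
  rw [weight, if_neg hN, ← hq_def]
  calc q ^ (-(2 * D.s)) / D.freeMass * (continuant (D.digit ω) (D.L * (N + 1)) : ℝ) ^ (2 * D.s)
      ≤ q ^ (-(2 * D.s)) / D.freeMass * (2 * Q * q) ^ (2 * D.s) := by gcongr
    _ = Q ^ (2 * D.s) * (2 ^ (2 * D.s) / D.freeMass) := by
      have := (Real.rpow_pos_of_pos hq (2 * D.s)).ne'
      rw [Real.mul_rpow (by positivity) hq.le, Real.mul_rpow zero_le_two hQ.le,
        Real.rpow_neg hq.le]
      field_simp
    _ ≤ Q ^ (2 * D.s) * (2 ^ 2 / (4 * Real.exp (D.V₁ * D.L))) := by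
      gcongr
      exact D.le_sum
    _ = Q ^ (2 * D.s) * Real.exp (-(D.V₁ * D.L)) := by
      rw [Real.exp_neg]
      field_simp
      ring

lemma prod_weight_mul_rpow_le (hω : ω ∈ D.paths) (N : ℕ) :
    (∏ i ∈ Finset.range N, D.weight i (ω i)) *
      (continuant (D.digit ω) (D.L * N) : ℝ) ^ (2 * D.s) ≤ D.cylinderGain N := by
  induction N with
  | zero => simp [cylinderGain, resetPow]
  | succ N ih =>
    have hG := D.prod_weight_nonneg ω N
    rw [Finset.prod_range_succ, mul_assoc]
    by_cases hN : N ∈ D.J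
    · refine (mul_le_mul_of_nonneg_left (weight_mul_rpow_le_of_mem hω hN) hG).trans ?_
      rw [cylinderGain, resetPow_succ_of_mem hN, ← mul_assoc]
      exact (mul_le_mul_of_nonneg_right ih (by positivity)).trans (D.sparse N hN)
    · refine (mul_le_mul_of_nonneg_left (weight_mul_rpow_le_of_notMem hω hN) hG).trans ?_
      rw [cylinderGain, resetPow_succ_of_notMem hN, ← mul_assoc]
      exact mul_le_mul_of_nonneg_right ih (Real.exp_pos _).le

end BlockScheme

/-! ### The Frostman condition -/

namespace IsContFrac

variable {a a' : ℕ → ℕ} {y y' : ℕ → ℝ}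

lemma one_le_mul (h : IsContFrac a y) (i : ℕ) : 1 ≤ y i * (a i + 1) :=
  (h.tail_mul i).ge.trans
    (mul_le_mul_of_nonneg_left (by linarith [h.lt_one (i + 1)]) (h.pos i).le)

lemma abs_sub_le_one_sub (h : IsContFrac a y) (h' : IsContFrac a' y') {i M : ℕ} (hM : 1 ≤ M)
    (ha : a i ≤ M ∧ a' i ≤ M ∨ 2 ≤ a i ∧ 2 ≤ a' i) : |y i - y' i| ≤ 1 - 1 / (M + 1) := by
  have hM' : 1 / ((M : ℝ) + 1) ≤ 1 / 2 :=
    one_div_le_one_div_of_le two_pos (by linarith [Nat.one_le_cast (α := ℝ).2 hM])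
  have hpos := h.pos i
  have hpos' := h'.pos i
  rw [abs_le]
  obtain ⟨haM, haM'⟩ | ⟨ha₂, ha₂'⟩ := ha
  · have hle : 1 / ((M : ℝ) + 1) ≤ y i := by
      rw [div_le_iff₀ (by positivity)]
      exact (h.one_le_mul i).trans (by gcongr)
    have hle' : 1 / ((M : ℝ) + 1) ≤ y' i := by
      rw [div_le_iff₀ (by positivity)]
      exact (h'.one_le_mul i).trans (by gcongr)
    constructor <;> linarith [h.lt_one i, h'.lt_one i]
  · have hle : y i * 2 ≤ 1 := by
      rw [← h.tail_mul i]
      gcongr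
      linarith [h.pos (i + 1), Nat.ofNat_le_cast (α := ℝ).2 ha₂]
    have hle' : y' i * 2 ≤ 1 := by
      rw [← h'.tail_mul i]
      gcongr
      linarith [h'.pos (i + 1), Nat.ofNat_le_cast (α := ℝ).2 ha₂']
    constructor <;> linarith

lemma mul_abs_sub_le (h : IsContFrac a y) (h' : IsContFrac a' y') (n : ℕ)
    (hag : ∀ i < n, a i = a' i) {κ : ℝ} (hκ : |y (n + 1) - y' (n + 1)| ≤ 1 - κ) :
    κ * |(a n : ℝ) - a' n| ≤
      4 * ((a n + 1) * (a' n + 1)) * (continuant a n : ℝ) ^ 2 * |y 0 - y' 0| := by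
  obtain heq | hne := eq_or_ne (a n) (a' n)
  · rw [heq, sub_self, abs_zero, mul_zero]
    positivity
  have hone : (1 : ℝ) ≤ |(a n : ℝ) - a' n| := by
    exact_mod_cast Int.one_le_abs (sub_ne_zero.2 (Nat.cast_injective.ne hne))
  have htail : κ * |(a n : ℝ) - a' n| ≤ |(a' n + y' (n + 1)) - (a n + y (n + 1))| := by
    have htri := abs_sub_abs_le_abs_sub ((a' n : ℝ) - a n) (y (n + 1) - y' (n + 1))
    rw [abs_sub_comm (a' n : ℝ),
      show (a' n : ℝ) - a n - (y (n + 1) - y' (n + 1)) =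
        (a' n + y' (n + 1)) - (a n + y (n + 1)) by ring] at htri
    have := mul_nonneg ((abs_nonneg _).trans hκ) (sub_nonneg.2 hone)
    linarith
  have hdiff : |y n - y' n| = y n * y' n * |(a' n + y' (n + 1)) - (a n + y (n + 1))| := by
    have hdiff' : y n - y' n = y n * y' n * ((a' n + y' (n + 1)) - (a n + y (n + 1))) := by
      linear_combination y' n * h.tail_mul n - y n * h'.tail_mul n
    rw [hdiff', abs_mul, abs_of_pos (mul_pos (h.pos n) (h'.pos n))]
  have hdist := le_dist h h' n hag
  rw [div_le_iff₀ (mul_pos four_pos (pow_pos (h.continuant_pos n) 2))] at hdist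
  calc κ * |(a n : ℝ) - a' n|
      ≤ |(a' n + y' (n + 1)) - (a n + y (n + 1))| := htail
    _ ≤ |(a' n + y' (n + 1)) - (a n + y (n + 1))| * (y n * (a n + 1) * (y' n * (a' n + 1))) :=
      le_mul_of_one_le_right (abs_nonneg _)
        (one_le_mul_of_one_le_of_one_le (h.one_le_mul n) (h'.one_le_mul n))
    _ = (a n + 1) * (a' n + 1) * |y n - y' n| := by
      rw [hdiff]
      ring
    _ ≤ (a n + 1) * (a' n + 1) * (|y 0 - y' 0| * (4 * (continuant a n : ℝ) ^ 2)) := by gcongr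
    _ = 4 * ((a n + 1) * (a' n + 1)) * (continuant a n : ℝ) ^ 2 * |y 0 - y' 0| := by ring

end IsContFrac

lemma card_le_mul_prod_Ioi {ι α : Type*} [Finite ι] [LinearOrder ι] [LocallyFiniteOrderTop ι]
    {W : ι → Finset α} {w₀ : ι → α} {k : ι} {I : Finset α} {F : Finset (ι → α)}
    (hF : ∀ w ∈ F, (∀ j, w j ∈ W j) ∧ (∀ j < k, w j = w₀ j) ∧ w k ∈ I) :
    F.card ≤ I.card * ∏ j ∈ Finset.Ioi k, (W j).card := by
  have := Fintype.ofFinite ι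
  let W' : ι → Finset α := fun j => if j < k then {w₀ j} else if j = k then I else W j
  have hsub : F ⊆ Fintype.piFinset W' := fun w hw => Fintype.mem_piFinset.2 fun j => by
    obtain ⟨hwW, hpre, hwI⟩ := hF w hw
    obtain hj | rfl | hj := lt_trichotomy j k
    · simpa [W', hj] using hpre j hj
    · simpa [W'] using hwI
    · simpa [W', hj.not_gt, hj.ne'] using hwW j
  refine (Finset.card_le_card hsub).trans_eq ?_
  have hIoi : ∏ j ∈ Finset.Ioi k, (W j).card = ∏ j ∈ Finset.univ.erase k, (W' j).card := by
    have hone : ∀ j ∈ Finset.univ.erase k, j ∉ Finset.Ioi k → (W' j).card = 1 := fun j hj hj' => by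
      have hlt : j < k := lt_of_le_of_ne (by simpa using hj') (Finset.ne_of_mem_erase hj)
      simp [W', hlt]
    rw [← Finset.prod_subset (fun j hj => by simpa using (Finset.mem_Ioi.1 hj).ne') hone]
    refine Finset.prod_congr rfl fun j hj => ?_
    have hj := Finset.mem_Ioi.1 hj
    simp [W', hj.not_gt, hj.ne']
  rw [Fintype.card_piFinset, hIoi, ← Finset.mul_prod_erase _ _ (Finset.mem_univ k)]
  simp [W']

lemma card_filter_abs_sub_le {A c : ℕ} {Y s : ℝ} (hY : 1 ≤ Y) (hs₀ : 0 ≤ s) (hs₁ : s ≤ 1) :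
    ((Finset.Ico A (2 * A)).filter fun v : ℕ => |(v : ℝ) - c| ≤ Y).card ≤
      (3 * Y) ^ s * (A : ℝ) ^ (1 - s) := by
  set I := (Finset.Ico A (2 * A)).filter fun v : ℕ => |(v : ℝ) - c| ≤ Y
  have hIA : I.card ≤ A := (Finset.card_filter_le _ _).trans (by rw [Nat.card_Ico]; omega)
  have hsub : I ⊆ Finset.Icc (c - ⌊Y⌋₊) (c + ⌊Y⌋₊) := fun v hv => by
    obtain ⟨hlow, hup⟩ := abs_le.1 (Finset.mem_filter.1 hv).2
    have hfloor := Nat.lt_floor_add_one Y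
    rw [Finset.mem_Icc, tsub_le_iff_right, ← Nat.lt_add_one_iff, ← Nat.lt_add_one_iff (m := v)]
    constructor <;> (rify; linarith)
  have hIY : (I.card : ℝ) ≤ 3 * Y := by
    have hcard := Finset.card_le_card hsub
    rw [Nat.card_Icc] at hcard
    have hcard' : I.card ≤ 2 * ⌊Y⌋₊ + 1 := by omega
    rify at hcard'
    linarith [Nat.floor_le (zero_le_one.trans hY)]
  obtain hzero | hpos := I.card.eq_zero_or_pos
  · rw [hzero, Nat.cast_zero]
    positivity
  calc (I.card : ℝ) = (I.card : ℝ) ^ s * (I.card : ℝ) ^ (1 - s) := by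
        rw [← Real.rpow_add (Nat.cast_pos.2 hpos), add_sub_cancel, Real.rpow_one]
    _ ≤ (3 * Y) ^ s * (A : ℝ) ^ (1 - s) := by gcongr

lemma mul_rpow_div_le_rpow {G Q R A E F c s : ℝ} (hG : 0 ≤ G) (hQ : 0 ≤ Q) (hR : 0 < R)
    (hA : 0 < A) (hc : 0 ≤ c) (hGQ : G * Q ^ (2 * s) ≤ E) (hRA : R ^ (2 * s - 1) * A ^ s ≤ F)
    (hEF : E * F ≤ 1) : G * ((c * A ^ 2 * Q ^ 2 * R ^ 2) ^ s * A ^ (1 - s) / (R * A)) ≤ c ^ s := by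
  have hsq : ∀ x : ℝ, 0 ≤ x → (x ^ 2) ^ s = x ^ (2 * s) := fun x hx => by
    rw [Real.rpow_mul hx, Real.rpow_two]
  have hAs : A ^ (2 * s) * A ^ (1 - s) / A = A ^ s := by
    rw [← Real.rpow_add hA, ← Real.rpow_sub_one hA.ne']
    ring_nf
  have hE : 0 ≤ E := (by positivity : 0 ≤ G * Q ^ (2 * s)).trans hGQ
  calc G * ((c * A ^ 2 * Q ^ 2 * R ^ 2) ^ s * A ^ (1 - s) / (R * A))
      = c ^ s * (G * Q ^ (2 * s) * (R ^ (2 * s) / R * (A ^ (2 * s) * A ^ (1 - s) / A))) := by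
        rw [Real.mul_rpow (by positivity) (sq_nonneg R),
          Real.mul_rpow (by positivity) (sq_nonneg Q), Real.mul_rpow hc (sq_nonneg A),
          hsq A hA.le, hsq Q hQ, hsq R hR.le]
        field_simp
    _ = c ^ s * (G * Q ^ (2 * s) * (R ^ (2 * s - 1) * A ^ s)) := by
        rw [hAs, Real.rpow_sub_one hR.ne']
    _ ≤ c ^ s * (E * F) := by gcongr
    _ ≤ c ^ s := mul_le_of_le_one_right (by positivity) hEF

lemma digitSizeProd_eq_mul_prod_Ioi (T : ℕ → ℝ) (x : ℝ) {L : ℕ} (k : Fin L) :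
    digitSizeProd T x L = digitSizeProd T x k * digitSize T x k *
      ∏ j ∈ Finset.Ioi k, (digitSize T x j : ℝ) := by
  have hIoi : ∏ j ∈ Finset.Ioi k, (digitSize T x j : ℝ) =
      ∏ j ∈ Finset.Ico (k + 1 : ℕ) L, (digitSize T x j : ℝ) := by
    rw [Finset.Ico_add_one_left_eq_Ioo, ← Fin.map_valEmbedding_Ioi, Finset.prod_map]
    rfl
  rw [hIoi, ← digitSizeProd_succ]
  exact (Finset.prod_range_mul_prod_Ico _ k.2).symm

namespace BlockScheme

/-- The point of `(0, 1)` whose continued fraction has the digits `D.digit ω`, or `0` if some of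
these digits vanish. -/
noncomputable def point (D : BlockScheme) (ω : ℕ → Fin D.L → ℕ) : ℝ :=
  open Classical in if h : ∃ y, IsContFrac (D.digit ω) y then h.choose 0 else 0

variable {D : BlockScheme} {ω ω' : ℕ → Fin D.L → ℕ}

lemma exists_isContFrac_point (hω : ω ∈ D.paths) :
    ∃ y, IsContFrac (D.digit ω) y ∧ D.point ω = y 0 := by
  have hex := exists_isContFrac (one_le_digit hω)
  exact ⟨hex.choose, hex.choose_spec, by rw [point, dif_pos hex]⟩

lemma abs_digit_sub_le (hω : ω ∈ D.paths) (hω' : ω' ∈ D.paths) (q : ℕ)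
    (hag : ∀ i < q, D.digit ω i = D.digit ω' i) :
    |(D.digit ω q : ℝ) - D.digit ω' q| ≤
      4 * (D.M + 1) * ((D.digit ω q + 1) * (D.digit ω' q + 1)) *
        (continuant (D.digit ω) q : ℝ) ^ 2 * |D.point ω - D.point ω'| := by
  obtain ⟨y, hy, hpoint⟩ := exists_isContFrac_point hω
  obtain ⟨y', hy', hpoint'⟩ := exists_isContFrac_point hω'
  have hgap := hy.mul_abs_sub_le hy' q hag
    (hy.abs_sub_le_one_sub hy' D.one_le_M (digit_le_or_two_le hω hω' (q + 1)))
  rw [one_div_mul_eq_div, div_le_iff₀ (by positivity)] at hgap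
  rw [hpoint, hpoint']
  linarith

lemma apply_eq_of_digit_eq {n : ℕ} (hag : ∀ q < n, D.digit ω q = D.digit ω' q) {i : ℕ}
    {j : Fin D.L} (hij : D.L * i + j < n) : ω i j = ω' i j := by
  simpa only [D.digit_mul_add _ i j.2] using hag _ hij

lemma block_eq_of_digit_eq {N n : ℕ} (hag : ∀ q < n, D.digit ω q = D.digit ω' q)
    (hN : D.L * N ≤ n) : ∀ i < N, ω i = ω' i := fun i hi => by
  have hle : D.L * (i + 1) ≤ D.L * N := Nat.mul_le_mul_left _ hi
  exact funext fun j => apply_eq_of_digit_eq hag (by rw [mul_add_one] at hle; omega)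

lemma measure_le_rpow {S : Set (ℕ → Fin D.L → ℕ)} (hω : ω ∈ D.paths) {N : ℕ}
    (hS : ∀ ω' ∈ S, ∀ i < N, ω' i = ω i) {x : ℝ} (hx : 0 ≤ x)
    (hxQ : 1 ≤ x * (continuant (D.digit ω) (D.L * N) : ℝ) ^ 2) :
    D.measure S ≤ ENNReal.ofReal (x ^ D.s) := by
  have hle := D.measure_le_of_agree fun ω' hω' => ⟨hS ω' hω', mem_univ (ω' N)⟩
  rw [measure_univ, mul_one] at hle
  exact hle.trans (ENNReal.ofReal_le_ofReal (le_rpow_of_mul_rpow_le_one (D.prod_weight_nonneg ω N)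
    (Nat.cast_nonneg _) hx D.s_pos.le
    ((prod_weight_mul_rpow_le hω N).trans (cylinderGain_le_one N)) hxQ))

lemma measure_eq_zero_of_digit_eq {S : Set (ℕ → Fin D.L → ℕ)} (hω : ω ∈ D.paths)
    (hS : ∀ ω' ∈ S, ∀ q, D.digit ω' q = D.digit ω q) : D.measure S = 0 := by
  have hle : ∀ N : ℕ, D.measure S ≤ ENNReal.ofReal ((2 * (1 / 2) ^ N) ^ D.s) := fun N => by
    refine measure_le_rpow (N := N) hω
      (fun ω' hω' => block_eq_of_digit_eq (fun q _ => hS ω' hω' q) le_rfl) (by positivity) ?_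
    have hgrow : (2 : ℝ) ^ N ≤ 2 * (continuant (D.digit ω) (D.L * N) : ℝ) ^ 2 :=
      (pow_le_pow_right₀ one_le_two (Nat.le_mul_of_pos_left N D.L_pos)).trans
        (by exact_mod_cast two_pow_le_two_mul_continuant_sq (one_le_digit hω) (D.L * N))
    calc (1 : ℝ) = (1 / 2) ^ N * 2 ^ N := by rw [← mul_pow]; norm_num
      _ ≤ (1 / 2) ^ N * (2 * (continuant (D.digit ω) (D.L * N) : ℝ) ^ 2) := by gcongr
      _ = 2 * (1 / 2) ^ N * (continuant (D.digit ω) (D.L * N) : ℝ) ^ 2 := by ring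
  have hlim : Tendsto (fun N : ℕ => ENNReal.ofReal ((2 * (1 / 2) ^ N) ^ D.s)) atTop (nhds 0) := by
    have hpow : Tendsto (fun N : ℕ => 2 * (1 / 2 : ℝ) ^ N) atTop (nhds (2 * 0)) :=
      (tendsto_pow_atTop_nhds_zero_of_lt_one (by norm_num) (by norm_num)).const_mul 2
    have hrpow := hpow.rpow_const (p := D.s) (Or.inr D.s_pos.le)
    rw [mul_zero, Real.zero_rpow D.s_pos.ne'] at hrpow
    simpa using ENNReal.tendsto_ofReal hrpow
  exact le_antisymm (ge_of_tendsto' hlim hle) zero_le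

lemma abs_digit_sub_le_of_notMem (hω : ω ∈ D.paths) (hω' : ω' ∈ D.paths) {N k : ℕ}
    (hN : N ∉ D.J) (hk : k < D.L) (hag : ∀ q < D.L * N + k, D.digit ω q = D.digit ω' q) :
    |(D.digit ω (D.L * N + k) : ℝ) - D.digit ω' (D.L * N + k)| ≤
      4 * (D.M + 1) ^ 3 * ((D.M + 1) ^ D.L) ^ 2 * |D.point ω - D.point ω'| *
        (continuant (D.digit ω) (D.L * N) : ℝ) ^ 2 := by
  have hM : (1 : ℝ) ≤ D.M + 1 := by simp
  have hgrow : (continuant (D.digit ω) (D.L * N + k) : ℝ) ≤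
      continuant (D.digit ω) (D.L * N) * (D.M + 1) ^ D.L :=
    (continuant_le_of_notMem hω hN hk.le).trans (by gcongr)
  have hle := digit_le hω hN hk
  have hle' := digit_le hω' hN hk
  calc |(D.digit ω (D.L * N + k) : ℝ) - D.digit ω' (D.L * N + k)|
      ≤ _ := abs_digit_sub_le hω hω' _ hag
    _ ≤ 4 * (D.M + 1) * ((D.M + 1) * (D.M + 1)) *
        (continuant (D.digit ω) (D.L * N) * (D.M + 1) ^ D.L) ^ 2 * |D.point ω - D.point ω'| := by
      gcongr
    _ = _ := by ring

lemma abs_digit_sub_le_of_mem (hω : ω ∈ D.paths) (hω' : ω' ∈ D.paths) {N k : ℕ}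
    (hN : N ∈ D.J) (hk : k < D.L) (hag : ∀ q < D.L * N + k, D.digit ω q = D.digit ω' q) :
    |(D.digit ω (D.L * N + k) : ℝ) - D.digit ω' (D.L * N + k)| ≤
      16 * (D.M + 1) * 4 ^ D.L * |D.point ω - D.point ω'| * digitSize D.T (D.start N) k ^ 2 *
        continuant (D.digit ω) (D.L * N) ^ 2 * digitSizeProd D.T (D.start N) k ^ 2 := by
  have hR := digitSizeProd_pos D.T (D.start N) k
  have hgrow : (continuant (D.digit ω) (D.L * N + k) : ℝ) ≤
      continuant (D.digit ω) (D.L * N) * (2 ^ D.L * digitSizeProd D.T (D.start N) k) :=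
    (continuant_le_of_mem hω hN hk.le).trans (by gcongr; exact one_le_two)
  have hle := digit_add_one_le hω hN hk
  have hle' := digit_add_one_le hω' hN hk
  have hfour : (4 : ℝ) ^ D.L = (2 ^ D.L) ^ 2 := by
    rw [← pow_mul, mul_comm, pow_mul]
    norm_num
  calc |(D.digit ω (D.L * N + k) : ℝ) - D.digit ω' (D.L * N + k)|
      ≤ _ := abs_digit_sub_le hω hω' _ hag
    _ ≤ 4 * (D.M + 1) *
        (2 * digitSize D.T (D.start N) k * (2 * digitSize D.T (D.start N) k)) *
        (continuant (D.digit ω) (D.L * N) * (2 ^ D.L * digitSizeProd D.T (D.start N) k)) ^ 2 *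
        |D.point ω - D.point ω'| := by gcongr
    _ = _ := by
      rw [hfour]
      ring

lemma blockMeasure_le_of_mem {N : ℕ} (hN : N ∈ D.J) (k : Fin D.L) (w₀ : Fin D.L → ℕ) {Y : ℝ}
    (hY : 1 ≤ Y) :
    D.blockMeasure N {w | (∀ j < k, w j = w₀ j) ∧ |(w k : ℝ) - w₀ k| ≤ Y} ≤
      ENNReal.ofReal ((3 * Y) ^ D.s * (digitSize D.T (D.start N) k : ℝ) ^ (1 - D.s) /
        (digitSizeProd D.T (D.start N) k * digitSize D.T (D.start N) k)) := by
  classical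
  set A := digitSize D.T (D.start N)
  set R := digitSizeProd D.T (D.start N) k
  have hR : 0 < R := digitSizeProd_pos _ _ _
  have hA : ∀ j, (0 : ℝ) < A j := fun j => Nat.cast_pos.2 (digitSize_pos _ _ _)
  have hpos : 0 < ∏ j ∈ Finset.Ioi k, (A j : ℝ) := Finset.prod_pos fun j _ => hA j
  set I := (Finset.Ico (A k) (2 * A k)).filter fun v : ℕ => |(v : ℝ) - w₀ k| ≤ Y
  set F := {w ∈ D.words N | w ∈ {w | (∀ j < k, w j = w₀ j) ∧ |(w k : ℝ) - w₀ k| ≤ Y}}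
  have hcard : (F.card : ℝ) ≤ I.card * ∏ j ∈ Finset.Ioi k, (A j : ℝ) := by
    have hF : F.card ≤ I.card * ∏ j ∈ Finset.Ioi k, (Finset.Ico (A j) (2 * A j)).card :=
      card_le_mul_prod_Ioi (w₀ := w₀) fun w hw => by
        obtain ⟨hwords, hpre, hclose⟩ := Finset.mem_filter.1 hw
        rw [words, if_pos hN, Fintype.mem_piFinset] at hwords
        exact ⟨hwords, hpre, Finset.mem_filter.2 ⟨hwords k, hclose⟩⟩
    simp only [Nat.card_Ico, two_mul, Nat.add_sub_cancel] at hF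
    exact_mod_cast hF
  have hI := card_filter_abs_sub_le (A := A k) (c := w₀ k) hY D.s_pos.le D.s_lt_one.le
  rw [blockMeasure, weightedMeasure_apply,
    ← ENNReal.ofReal_sum_of_nonneg fun w _ => D.weight_nonneg N w]
  refine ENNReal.ofReal_le_ofReal ?_
  simp only [weight, if_pos hN, Finset.sum_const, nsmul_eq_mul]
  rw [digitSizeProd_eq_mul_prod_Ioi D.T (D.start N) k]
  calc F.card * (R * A k * ∏ j ∈ Finset.Ioi k, (A j : ℝ))⁻¹
      ≤ (I.card * ∏ j ∈ Finset.Ioi k, (A j : ℝ)) *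
          (R * A k * ∏ j ∈ Finset.Ioi k, (A j : ℝ))⁻¹ :=
        mul_le_mul_of_nonneg_right hcard
          (inv_nonneg.2 (mul_pos (mul_pos hR (hA k)) hpos).le)
    _ = I.card / (R * A k) := by field_simp
    _ ≤ _ := div_le_div_of_nonneg_right hI (mul_pos hR (hA k)).le

section FirstDifference

variable {S : Set (ℕ → Fin D.L → ℕ)} {δ : ℝ} {N k : ℕ}

lemma measure_le_rpow_of_notMem (hS : S ⊆ D.paths)
    (hδ : ∀ ω ∈ S, ∀ ω' ∈ S, |D.point ω - D.point ω'| ≤ δ) (hN : N ∉ D.J) (hk : k < D.L)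
    (hag : ∀ ω ∈ S, ∀ ω' ∈ S, ∀ q < D.L * N + k, D.digit ω q = D.digit ω' q)
    (hω : ω ∈ S) (hω' : ω' ∈ S) (hne : D.digit ω (D.L * N + k) ≠ D.digit ω' (D.L * N + k)) :
    D.measure S ≤ ENNReal.ofReal ((4 * (D.M + 1) ^ 3 * ((D.M + 1) ^ D.L) ^ 2 * δ) ^ D.s) := by
  have hdist := hδ ω hω ω' hω'
  have hδ₀ : 0 ≤ δ := (abs_nonneg _).trans hdist
  refine measure_le_rpow (N := N) (hS hω)
    (fun ω'' hω'' => block_eq_of_digit_eq (hag ω'' hω'' ω hω) (Nat.le_add_right _ _))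
    (by positivity) ?_
  calc (1 : ℝ) ≤ |(D.digit ω (D.L * N + k) : ℝ) - D.digit ω' (D.L * N + k)| := by
        exact_mod_cast Int.one_le_abs (sub_ne_zero.2 (Nat.cast_injective.ne hne))
    _ ≤ _ := abs_digit_sub_le_of_notMem (hS hω) (hS hω') hN hk (hag ω hω ω' hω')
    _ ≤ _ := by gcongr

lemma cylinderGain_mul_le_one (hN : N ∈ D.J) (hk : k < D.L) :
    D.cylinderGain N * (2 ^ (k + 1) * Real.exp (D.start N * D.V₀)) ≤ 1 := by
  have hgain := D.cylinderGain_pos N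
  refine le_trans ?_ (D.sparse N hN)
  rw [← start, pow_succ']
  have hpow : (2 : ℝ) ^ k ≤ 8 ^ D.L :=
    (pow_le_pow_right₀ one_le_two hk.le).trans (by gcongr; norm_num)
  change D.cylinderGain N * _ ≤ D.cylinderGain N * _
  gcongr

lemma measure_le_rpow_of_mem (hS : S ⊆ D.paths)
    (hδ : ∀ ω ∈ S, ∀ ω' ∈ S, |D.point ω - D.point ω'| ≤ δ) (hN : N ∈ D.J) (hk : k < D.L)
    (hag : ∀ ω ∈ S, ∀ ω' ∈ S, ∀ q < D.L * N + k, D.digit ω q = D.digit ω' q)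
    (hω : ω ∈ S) (hω' : ω' ∈ S) (hne : D.digit ω (D.L * N + k) ≠ D.digit ω' (D.L * N + k)) :
    D.measure S ≤ ENNReal.ofReal ((48 * (D.M + 1) * 4 ^ D.L * δ) ^ D.s) := by
  have hδ₀ : 0 ≤ δ := (abs_nonneg _).trans (hδ ω hω ω' hω')
  set A : ℝ := (digitSize D.T (D.start N) k : ℝ)
  set R : ℝ := digitSizeProd D.T (D.start N) k
  set Q : ℝ := (continuant (D.digit ω) (D.L * N) : ℝ)
  set Y : ℝ := 16 * (D.M + 1) * 4 ^ D.L * δ * A ^ 2 * Q ^ 2 * R ^ 2 with hY_def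
  have hclose : ∀ ω'' ∈ S, |(D.digit ω'' (D.L * N + k) : ℝ) - D.digit ω (D.L * N + k)| ≤ Y :=
    fun ω'' hω'' => by
      rw [abs_sub_comm]
      refine (abs_digit_sub_le_of_mem (hS hω) (hS hω'') hN hk (hag ω hω ω'' hω'')).trans ?_
      have := hδ ω hω ω'' hω''
      rw [hY_def]
      gcongr
  have hY : 1 ≤ Y := by
    refine le_trans ?_ (hclose ω' hω')
    exact_mod_cast Int.one_le_abs (sub_ne_zero.2 (Nat.cast_injective.ne hne.symm))
  have hle := D.measure_le_of_agree (S := S) (ω₁ := ω) (N := N)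
    (B := {w | (∀ j < ⟨k, hk⟩, w j = ω N j) ∧ |(w ⟨k, hk⟩ : ℝ) - ω N ⟨k, hk⟩| ≤ Y})
    fun ω'' hω'' => by
      refine ⟨block_eq_of_digit_eq (hag ω'' hω'' ω hω) (Nat.le_add_right _ _), fun j hj =>
        apply_eq_of_digit_eq (hag ω'' hω'' ω hω) (Nat.add_lt_add_left hj _), ?_⟩
      simpa only [D.digit_mul_add _ N hk] using hclose ω'' hω''
  refine hle.trans ((mul_le_mul_right (blockMeasure_le_of_mem hN ⟨k, hk⟩ (ω N) hY) _).trans ?_)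
  rw [← ENNReal.ofReal_mul (D.prod_weight_nonneg ω N)]
  refine ENNReal.ofReal_le_ofReal ?_
  have hthree : 3 * Y = 48 * (D.M + 1) * 4 ^ D.L * δ * A ^ 2 * Q ^ 2 * R ^ 2 := by
    rw [hY_def]
    ring
  rw [hthree]
  exact mul_rpow_div_le_rpow (D.prod_weight_nonneg ω N) (Nat.cast_nonneg _)
    (digitSizeProd_pos _ _ _) (Nat.cast_pos.2 (digitSize_pos _ _ _)) (by positivity)
    (prod_weight_mul_rpow_le (hS hω) N)
    (digitSizeProd_rpow_mul_digitSize_rpow_le D.monotone_T D.T_zero (D.start_nonneg N)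
      D.s_lt_one.le (D.le_V₀ k))
    (cylinderGain_mul_le_one hN hk)

lemma measure_le_rpow_of_abs_sub_le (hS : S ⊆ D.paths) (hδ₀ : 0 ≤ δ)
    (hδ : ∀ ω ∈ S, ∀ ω' ∈ S, |D.point ω - D.point ω'| ≤ δ) :
    D.measure S ≤ ENNReal.ofReal
      ((max (4 * (D.M + 1 : ℝ) ^ 3 * ((D.M + 1 : ℝ) ^ D.L) ^ 2) (48 * (D.M + 1 : ℝ) * 4 ^ D.L) *
        δ) ^ D.s) := by
  have hmono : ∀ {a b : ℝ}, 0 ≤ a → a ≤ b →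
      ENNReal.ofReal ((a * δ) ^ D.s) ≤ ENNReal.ofReal ((b * δ) ^ D.s) := fun ha hab =>
    ENNReal.ofReal_le_ofReal (Real.rpow_le_rpow (by positivity) (by gcongr) D.s_pos.le)
  by_cases hex : ∃ q, ∃ ω ∈ S, ∃ ω' ∈ S, D.digit ω q ≠ D.digit ω' q
  · classical
    obtain ⟨ω, hω, ω', hω', hne⟩ := Nat.find_spec hex
    have hag : ∀ ω ∈ S, ∀ ω' ∈ S, ∀ q < Nat.find hex, D.digit ω q = D.digit ω' q :=
      fun ω hω ω' hω' q hq => by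
        by_contra hne
        exact Nat.find_min hex hq ⟨ω, hω, ω', hω', hne⟩
    have hk : Nat.find hex % D.L < D.L := Nat.mod_lt _ D.L_pos
    rw [← Nat.div_add_mod (Nat.find hex) D.L] at hne hag
    by_cases hN : Nat.find hex / D.L ∈ D.J
    · exact (measure_le_rpow_of_mem hS hδ hN hk hag hω hω' hne).trans
        (hmono (by positivity) (le_max_right _ _))
    · exact (measure_le_rpow_of_notMem hS hδ hN hk hag hω hω' hne).trans
        (hmono (by positivity) (le_max_left _ _))
  · push Not at hex
    obtain rfl | ⟨ω, hω⟩ := S.eq_empty_or_nonempty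
    · rw [measure_empty]
      exact zero_le
    · rw [measure_eq_zero_of_digit_eq (hS hω) fun ω' hω' q => hex q ω' hω' ω hω]
      exact zero_le

end FirstDifference

lemma exists_measure_preimage_le (D : BlockScheme) : ∃ C : NNReal, ∀ U : Set ℝ,
    D.measure (D.paths ∩ D.point ⁻¹' U) ≤ C * Metric.ediam U ^ D.s := by
  set C : ℝ := max (4 * (D.M + 1) ^ 3 * ((D.M + 1) ^ D.L) ^ 2) (48 * (D.M + 1) * 4 ^ D.L)
  have hC : 0 < C := lt_max_of_lt_right (by positivity)
  refine ⟨(C ^ D.s).toNNReal, fun U => ?_⟩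
  change _ ≤ ENNReal.ofReal (C ^ D.s) * _
  obtain htop | htop := eq_or_ne (Metric.ediam U) ⊤
  · rw [htop, ENNReal.top_rpow_of_pos D.s_pos,
      ENNReal.mul_top (ENNReal.ofReal_pos.2 (Real.rpow_pos_of_pos hC D.s)).ne']
    exact le_top
  set δ := (Metric.ediam U).toReal
  have hδ₀ : 0 ≤ δ := ENNReal.toReal_nonneg
  have hU : Metric.ediam U = ENNReal.ofReal δ := (ENNReal.ofReal_toReal htop).symm
  rw [hU, ENNReal.ofReal_rpow_of_nonneg hδ₀ D.s_pos.le, ← ENNReal.ofReal_mul (by positivity),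
    ← Real.mul_rpow hC.le hδ₀]
  refine measure_le_rpow_of_abs_sub_le inter_subset_left hδ₀ fun ω hω ω' hω' => ?_
  have hedist := Metric.edist_le_ediam_of_mem (s := U) (show D.point ω ∈ U from hω.2)
    (show D.point ω' ∈ U from hω'.2)
  rwa [hU, edist_dist, Real.dist_eq, ENNReal.ofReal_le_ofReal_iff hδ₀] at hedist

lemma le_dimH_image_point (D : BlockScheme) : ENNReal.ofReal D.s ≤ dimH (D.point '' D.paths) := by
  obtain ⟨C, hC⟩ := D.exists_measure_preimage_le
  refine le_dimH_image_of_measure_preimage_le (C := C) (s := D.s.toNNReal) D.measure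
    D.measure_paths_ne_zero fun U => ?_
  rw [Real.coe_toNNReal _ D.s_pos.le]
  exact hC U

end BlockScheme

/-! ### Points of the Cantor set -/

namespace BlockScheme

variable {D : BlockScheme} {ω : ℕ → Fin D.L → ℕ}

-- The truncated subtraction makes all the sizes before the block `i` equal to `1`.
lemma digit_le_mul_digitSize (hω : ω ∈ D.paths) {i q : ℕ} (hq : q / D.L ∈ D.J → q / D.L = i) :
    D.digit ω q ≤ 2 * D.M * digitSize (fun l => D.T (l - D.L * i)) (D.start i) q := by
  have hM := D.one_le_M
  have hk : q % D.L < D.L := Nat.mod_lt _ D.L_pos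
  have hdigit := Nat.div_add_mod q D.L
  by_cases hN : q / D.L ∈ D.J
  · have hsize : digitSize (fun l => D.T (l - D.L * i)) (D.start i) q =
        digitSize D.T (D.start i) (q % D.L) := by
      rw [hq hN] at hdigit
      have hsub : q - D.L * i = q % D.L := by omega
      have hsub' : q + 1 - D.L * i = q % D.L + 1 := by omega
      simp only [digitSize, hsub, hsub']
    have hlt := (Finset.mem_Ico.1 (digit_mem_Ico hω hN hk)).2
    rw [hdigit, hq hN] at hlt
    rw [hsize]
    exact hlt.le.trans (Nat.mul_le_mul_right _ (by omega))
  · have hle := (Finset.mem_Icc.1 (digit_mem_Icc hω hN hk)).2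
    rw [hdigit] at hle
    exact (hle.trans (by omega)).trans (Nat.le_mul_of_pos_right _ (digitSize_pos _ _ _))

lemma exists_block_of_le {J : Set ℕ} (hJ : ∀ i ∈ J, i + 1 ∉ J) {L r : ℕ} (hL : 0 < L)
    (hr : r ≤ L) (n : ℕ) :
    ∃ i, L * i ≤ n + L ∧ ∀ j < r, (n + j) / L ∈ J → (n + j) / L = i := by
  have hdiv := Nat.mul_div_le n L
  have hnext : ∀ j < r, (n + j) / L = n / L ∨ (n + j) / L = n / L + 1 := fun j hj => by
    have hlo : n / L ≤ (n + j) / L := Nat.div_le_div_right (Nat.le_add_right n j)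
    have hhi : (n + j) / L ≤ (n + L) / L := Nat.div_le_div_right (by omega)
    rw [Nat.add_div_right n hL] at hhi
    omega
  by_cases hN : n / L ∈ J
  · exact ⟨n / L, by omega, fun j hj hmem => (hnext j hj).resolve_right fun h => hJ _ hN (h ▸ hmem)⟩
  · exact ⟨n / L + 1, by rw [mul_add_one]; omega, fun j hj hmem =>
      (hnext j hj).resolve_left fun h => hN (h ▸ hmem)⟩

lemma prod_digit_le (hω : ω ∈ D.paths) (hJ : ∀ i ∈ D.J, i + 1 ∉ D.J) {r : ℕ} (hr : r ≤ D.L)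
    {β : ℝ} (hT : ∀ k, D.T (k + r) - D.T k ≤ β) (n : ℕ) :
    ∏ j ∈ Finset.range r, (D.digit ω (n + j) : ℝ) ≤
      (2 * D.M) ^ r * (2 ^ r * Real.exp ((n + D.L + 1) * β)) := by
  obtain ⟨i, hi, hblock⟩ := exists_block_of_le hJ D.L_pos hr n
  set T' : ℕ → ℝ := fun l => D.T (l - D.L * i)
  have hmono : Monotone T' := fun k l hkl => D.monotone_T (Nat.sub_le_sub_right hkl _)
  have hwindow : T' (n + r) - T' n ≤ β :=
    (sub_le_sub_right (D.monotone_T (by omega)) _).trans (hT (n - D.L * i))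
  have hstart : D.start i ≤ n + D.L + 1 := by
    unfold start
    gcongr
    exact_mod_cast hi
  calc ∏ j ∈ Finset.range r, (D.digit ω (n + j) : ℝ)
      ≤ ∏ j ∈ Finset.range r, (2 * D.M * digitSize T' (D.start i) (n + j) : ℝ) :=
        Finset.prod_le_prod (fun _ _ => Nat.cast_nonneg _) fun j hj => by
          exact_mod_cast digit_le_mul_digitSize hω (hblock j (Finset.mem_range.1 hj))
    _ = (2 * D.M) ^ r * ∏ j ∈ Finset.range r, (digitSize T' (D.start i) (n + j) : ℝ) := by
        rw [Finset.prod_mul_distrib, Finset.prod_const, Finset.card_range]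
    _ ≤ (2 * D.M) ^ r * (2 ^ r * Real.exp (D.start i * (T' (n + r) - T' n))) := by
        gcongr
        exact prod_digitSize_le hmono (D.start_nonneg i) n r
    _ ≤ _ := by
        have := D.start_nonneg i
        have := sub_nonneg.2 (hmono (Nat.le_add_right n r))
        gcongr

lemma pow_le_prod_digit (hω : ω ∈ D.paths) {m : ℕ} (hm : m ≤ D.L) {B : ℝ} (hB : 0 < B)
    (hT : D.T m = Real.log B) {i : ℕ} (hi : i ∈ D.J) :
    B ^ (D.L * i + 1) ≤ ∏ j ∈ Finset.range m, (D.digit ω (D.L * i + j) : ℝ) := by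
  calc B ^ (D.L * i + 1) = Real.exp (D.start i * D.T m) := by
        rw [hT, ← Real.exp_log hB, ← Real.exp_nat_mul, Real.log_exp, start]
        push_cast
        rfl
    _ ≤ digitSizeProd D.T (D.start i) m := exp_le_digitSizeProd D.T_zero _ m
    _ ≤ _ := Finset.prod_le_prod (fun _ _ => Nat.cast_nonneg _) fun j hj => by
        exact_mod_cast
          (Finset.mem_Ico.1 (digit_mem_Ico hω hi ((Finset.mem_range.1 hj).trans_le hm))).1

lemma point_mem_digitProductSet (hω : ω ∈ D.paths) {m : ℕ} (hm : m ≤ D.L) {B₁ B₂ β : ℝ}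
    (hJ : D.J.Infinite) (hJ' : ∀ i ∈ D.J, i + 1 ∉ D.J) (hB₁ : 0 < B₁) (hB₂ : 0 < B₂)
    (hTm : D.T m = Real.log B₁) (hβ : β < Real.log B₂)
    (hT : ∀ k, D.T (k + (m - 1)) - D.T k ≤ β) : D.point ω ∈ digitProductSet m B₁ B₂ := by
  obtain ⟨y, hy, hpoint⟩ := exists_isContFrac_point hω
  have hpq : ∀ n j, (pq (D.point ω) (n + 1 + j) : ℝ) = D.digit ω (n + j) := fun n j => by
    rw [hpoint, add_right_comm, hy.pq_eq]
  refine ⟨hpoint ▸ ⟨hy.pos 0, hy.lt_one 0⟩, hpoint ▸ hy.irrational, ?_, ?_⟩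
  · have hinj : InjOn (fun i => D.L * i + 1) D.J := fun i _ j _ hij =>
      Nat.eq_of_mul_eq_mul_left D.L_pos (Nat.add_right_cancel hij)
    refine (hJ.image hinj).mono ?_
    rintro _ ⟨i, hi, rfl⟩
    simp only [mem_ofPred_eq, hpq]
    exact pow_le_prod_digit hω hm hB₁ hTm hi
  · set C : ℝ := (2 * D.M) ^ (m - 1) * (2 ^ (m - 1) * Real.exp ((D.L + 1) * β)) with hC_def
    have hlim : Tendsto (fun n : ℕ => Real.exp (n * (Real.log B₂ - β))) atTop atTop :=
      Real.tendsto_exp_atTop.comp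
        (tendsto_natCast_atTop_atTop.atTop_mul_const (sub_pos.2 hβ))
    filter_upwards [hlim.eventually_gt_atTop C] with n hn
    simp only [hpq]
    calc ∏ j ∈ Finset.range (m - 1), (D.digit ω (n + j) : ℝ)
        ≤ _ := prod_digit_le hω hJ' ((Nat.sub_le m 1).trans hm) hT n
      _ = C * Real.exp (n * β) := by
        rw [hC_def, show ((n : ℝ) + D.L + 1) * β = (D.L + 1) * β + n * β by ring, Real.exp_add]
        ring
      _ < Real.exp (n * (Real.log B₂ - β)) * Real.exp (n * β) := by gcongr
      _ = B₂ ^ n := by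
        rw [← Real.exp_add, ← mul_add, sub_add_cancel, Real.exp_nat_mul, Real.exp_log hB₂]

end BlockScheme

/-! ### Lower bound -/

lemma exists_le_sum_Icc {s x : ℝ} {n : ℕ} (h : ENNReal.ofReal x < partitionSum s n) :
    ∃ M : ℕ, 1 ≤ M ∧ x ≤ ∑ w ∈ Fintype.piFinset fun _ : Fin n => Finset.Icc 1 M,
      (contQ n w : ℝ) ^ (-(2 * s)) := by
  classical
  rw [partitionSum, ENNReal.tsum_eq_iSup_sum] at h
  obtain ⟨F, hF⟩ := lt_iSup_iff.1 h
  rw [← ENNReal.ofReal_sum_of_nonneg fun _ _ => by positivity] at hF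
  obtain ⟨M, hM⟩ : ∃ M : ℕ, ∀ w ∈ F, ∀ i, (w i : ℕ) ≤ M :=
    ⟨∑ w ∈ F, ∑ i, (w i : ℕ), fun w hw i =>
      (Finset.single_le_sum (f := fun i => (w i : ℕ)) (fun _ _ => Nat.zero_le _)
        (Finset.mem_univ i)).trans
      (Finset.single_le_sum (f := fun w : Fin n → ℕ+ => ∑ i, (w i : ℕ))
        (fun _ _ => Nat.zero_le _) hw)⟩
  refine ⟨M + 1, Nat.le_add_left 1 M, (ENNReal.ofReal_lt_ofReal_iff'.1 hF).1.le.trans ?_⟩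
  have hinj : InjOn (fun (w : Fin n → ℕ+) (i : Fin n) => (w i : ℕ)) F := fun v _ w _ hvw =>
    funext fun i => PNat.coe_injective (congrFun hvw i)
  rw [← Finset.sum_image (f := fun w : Fin n → ℕ => (contQ n w : ℝ) ^ (-(2 * s))) hinj]
  refine Finset.sum_le_sum_of_subset_of_nonneg (fun v hv => ?_) fun _ _ _ => by positivity
  obtain ⟨w, hw, rfl⟩ := Finset.mem_image.1 hv
  exact Fintype.mem_piFinset.2 fun i =>
    Finset.mem_Icc.2 ⟨(w i).pos, (hM w hw i).trans (Nat.le_succ M)⟩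

lemma le_dimH_digitProductSet {m : ℕ} {B₁ B₂ s V₀ c β : ℝ} {T : ℕ → ℝ} (hB₁ : 0 < B₁)
    (hB₂ : 0 < B₂) (hs₀ : 0 < s) (hs₁ : s < 1) (hT : Monotone T) (hT₀ : T 0 = 0)
    (hTm : T m = Real.log B₁) (hV : ∀ k, s * T (k + 1) - (1 - s) * T k ≤ V₀) (hV₀ : 0 < V₀)
    (hβ : β < Real.log B₂) (hTβ : ∀ k, T (k + (m - 1)) - T k ≤ β) (hc : V₀ < c)
    (hfreq : ∃ᶠ n : ℕ in atTop, ENNReal.ofReal (Real.exp (c * n)) ≤ partitionSum s n) :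
    ENNReal.ofReal s ≤ dimH (digitProductSet m B₁ B₂) := by
  classical
  obtain ⟨V₁, hV₁, hV₁c⟩ := exists_between hc
  have hlim : Tendsto (fun n : ℕ => Real.exp (n * (c - V₁))) atTop atTop :=
    Real.tendsto_exp_atTop.comp (tendsto_natCast_atTop_atTop.atTop_mul_const (sub_pos.2 hV₁c))
  obtain ⟨L, hL, hfour, hmL⟩ := (hfreq.and_eventually
    ((hlim.eventually_gt_atTop 4).and (eventually_ge_atTop (m + 1)))).exists
  have hexp : 4 * Real.exp (V₁ * L) < Real.exp (c * L) := by
    calc 4 * Real.exp (V₁ * L) < Real.exp (L * (c - V₁)) * Real.exp (V₁ * L) := by gcongr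
      _ = Real.exp (c * L) := by
        rw [← Real.exp_add]
        ring_nf
  obtain ⟨M, hM, hsum⟩ := exists_le_sum_Icc
    (((ENNReal.ofReal_lt_ofReal_iff (Real.exp_pos _)).2 hexp).trans_le hL)
  obtain ⟨J, hJ, hJ', hsparse⟩ := exists_sparse_set (Nat.zero_lt_of_lt hmL) hV₀ hV₁
  let D : BlockScheme :=
    { L, M, s, V₀, V₁, T, J
      decidableMem := inferInstance
      L_pos := Nat.zero_lt_of_lt hmL
      one_le_M := hM
      s_pos := hs₀
      s_lt_one := hs₁
      V₁_nonneg := (hV₀.trans hV₁).le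
      monotone_T := hT
      T_zero := hT₀
      le_V₀ := hV
      le_sum := hsum
      sparse := hsparse }
  refine D.le_dimH_image_point.trans (dimH_mono ?_)
  rintro _ ⟨ω, hω, rfl⟩
  exact BlockScheme.point_mem_digitProductSet (D := D) hω (Nat.le_of_succ_le hmL) hJ hJ' hB₁ hB₂
    hTm hβ hTβ

/-! ### Greedy profiles -/

/-- A function `T` with `T m = b` whose increments over `m - 1` steps are at most `β`. As long as
these constraints allow it, `T k` is the largest solution of `T (k + 1) - r * T k ≤ b - r * β`
with `T 0 = 0`. -/
noncomputable def greedyProfile (m : ℕ) (b β r : ℝ) (k : ℕ) : ℝ :=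
  if k < m then min β ((b - r * β) * ∑ i ∈ Finset.range k, r ^ i) else b

section GreedyProfile

variable {m k : ℕ} {b β r : ℝ}

lemma greedyProfile_of_lt (hk : k < m) :
    greedyProfile m b β r k = min β ((b - r * β) * ∑ i ∈ Finset.range k, r ^ i) := if_pos hk

lemma greedyProfile_of_le (hk : m ≤ k) : greedyProfile m b β r k = b := if_neg hk.not_gt

lemma greedyProfile_zero (hm : 0 < m) (hβ : 0 ≤ β) : greedyProfile m b β r 0 = 0 := by
  rw [greedyProfile_of_lt hm, Finset.sum_range_zero, mul_zero, min_eq_right hβ]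

lemma monotone_greedyProfile (hr : 0 ≤ r) (hrβ : r * β ≤ b) (hβ : β ≤ b) :
    Monotone (greedyProfile m b β r) := by
  refine monotone_nat_of_le_succ fun k => ?_
  obtain hk | hk := lt_or_ge (k + 1) m
  · have := sub_nonneg.2 hrβ
    rw [greedyProfile_of_lt (Nat.lt_of_succ_lt hk), greedyProfile_of_lt hk, Finset.sum_range_succ]
    gcongr
    exact le_add_of_nonneg_right (pow_nonneg hr k)
  · rw [greedyProfile_of_le hk]
    obtain hk' | hk' := lt_or_ge k m
    · exact (greedyProfile_of_lt hk').trans_le ((min_le_left _ _).trans hβ)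
    · exact (greedyProfile_of_le hk').le

lemma greedyProfile_succ_sub_le (hr₀ : 0 ≤ r) (hβ : β ≤ b)
    (hm : b ≤ (b - r * β) * ∑ i ∈ Finset.range m, r ^ i) (k : ℕ) :
    greedyProfile m b β r (k + 1) - r * greedyProfile m b β r k ≤ b - r * β := by
  have hsucc := geom_sum_succ (x := r) (n := k)
  set S := ∑ i ∈ Finset.range k, r ^ i
  obtain hk | hk := lt_or_ge k m
  · have hle : greedyProfile m b β r (k + 1) ≤ min b ((b - r * β) * (r * S + 1)) := by
      obtain hk' | rfl := (Nat.succ_le_of_lt hk).lt_or_eq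
      · rw [greedyProfile_of_lt hk', hsucc]
        exact min_le_min_right _ hβ
      · rw [greedyProfile_of_le le_rfl, ← hsucc]
        exact le_min le_rfl hm
    rw [greedyProfile_of_lt hk]
    obtain h | h := le_total β ((b - r * β) * S)
    · rw [min_eq_left h]
      linarith [hle.trans (min_le_left _ _)]
    · rw [min_eq_right h]
      linarith [hle.trans (min_le_right _ _)]
  · rw [greedyProfile_of_le hk, greedyProfile_of_le (hk.trans k.le_succ)]
    linarith [mul_le_mul_of_nonneg_left hβ hr₀]

lemma greedyProfile_add_sub_le (hm : 2 ≤ m) (hr₀ : 0 ≤ r) (hr₁ : r ≤ 1) (hbβ : b ≤ 2 * β)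
    (hβ : β ≤ b) (k : ℕ) :
    greedyProfile m b β r (k + (m - 1)) - greedyProfile m b β r k ≤ β := by
  have hβ₀ : 0 ≤ β := by linarith
  have hrβ : r * β ≤ β := mul_le_of_le_one_left hβ₀ hr₁
  obtain rfl | hk := Nat.eq_zero_or_pos k
  · rw [greedyProfile_zero (by omega) hβ₀, sub_zero, zero_add, greedyProfile_of_lt (by omega)]
    exact min_le_left _ _
  · have hone : greedyProfile m b β r 1 ≤ greedyProfile m b β r k :=
      monotone_greedyProfile hr₀ (hrβ.trans hβ) hβ hk
    rw [greedyProfile_of_lt (by omega), Finset.sum_range_one, pow_zero, mul_one] at hone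
    have hmin : b - β ≤ min β (b - r * β) := le_min (by linarith) (by linarith)
    rw [greedyProfile_of_le (by omega)]
    linarith

end GreedyProfile

/-! ### Comparison of the exponents -/

lemma fIter_pos {s : ℝ} (hs₀ : 0 < s) (hs₁ : s ≤ 1) (k : ℕ) : 0 < fIter s k := by
  induction k with
  | zero => exact hs₀
  | succ k ih => exact div_pos (mul_pos hs₀ ih) (by linarith)

lemma fIter_mul_geom_sum {s : ℝ} (hs₀ : 0 < s) (hs₁ : s ≤ 1) (k : ℕ) :
    fIter s k * ∑ i ∈ Finset.range (k + 1), ((1 - s) / s) ^ i = s := by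
  induction k with
  | zero => simp [fIter]
  | succ k ih =>
    have hpos := fIter_pos hs₀ hs₁ k
    have hden : 0 < 1 - s + fIter s k := by linarith
    rw [geom_sum_succ, fIter, div_mul_eq_mul_div, div_eq_iff hden.ne']
    calc s * fIter s k * ((1 - s) / s * ∑ i ∈ Finset.range (k + 1), ((1 - s) / s) ^ i + 1)
        = (1 - s) * (fIter s k * ∑ i ∈ Finset.range (k + 1), ((1 - s) / s) ^ i) +
          s * fIter s k := by field_simp
      _ = s * (1 - s + fIter s k) := by
        rw [ih]
        ring

lemma continuousAt_fIter {s : ℝ} (hs₀ : 0 < s) (hs₁ : s ≤ 1) (k : ℕ) :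
    ContinuousAt (fun s => fIter s k) s := by
  induction k with
  | zero => exact continuousAt_id
  | succ k ih =>
    have hpos := fIter_pos hs₀ hs₁ k
    exact (continuousAt_id.mul ih).div ((continuousAt_const.sub continuousAt_id).add ih)
      (by linarith : 0 < 1 - s + fIter s k).ne'

lemma continuous_gRate (B₁ B₂ : ℝ) : Continuous (gRate B₁ B₂) := by
  unfold gRate
  fun_prop

lemma pow_sub_div_eq_geom_sum_div {t : ℝ} (ht₀ : 0 < t) (ht : 1 - t ≠ t) (k : ℕ) :
    (t ^ (k + 1) - t * (1 - t) ^ k) / (t ^ (k + 1) - (1 - t) ^ (k + 1)) =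
      (∑ i ∈ Finset.range k, ((1 - t) / t) ^ i) /
        ∑ i ∈ Finset.range (k + 1), ((1 - t) / t) ^ i := by
  have hr : (1 - t) / t ≠ 1 := by rwa [Ne, div_eq_one_iff_eq ht₀.ne']
  have hrt : 1 - t = (1 - t) / t * t := by field_simp
  set r := (1 - t) / t
  rw [hrt, geom_sum_eq hr, geom_sum_eq hr, div_div_div_cancel_right₀ (sub_ne_zero.2 hr)]
  calc (t ^ (k + 1) - t * (r * t) ^ k) / (t ^ (k + 1) - (r * t) ^ (k + 1))
      = (-t ^ (k + 1)) * (r ^ k - 1) / (-t ^ (k + 1) * (r ^ (k + 1) - 1)) := by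
        rw [mul_pow, mul_pow]
        congr 1 <;> ring
    _ = (r ^ k - 1) / (r ^ (k + 1) - 1) :=
      mul_div_mul_left _ _ (neg_ne_zero.2 (pow_pos ht₀ _).ne')

lemma geom_sum_div_geom_sum_succ_le_one {r : ℝ} (hr : 0 ≤ r) (k : ℕ) :
    (∑ i ∈ Finset.range k, r ^ i) / ∑ i ∈ Finset.range (k + 1), r ^ i ≤ 1 := by
  refine div_le_one_of_le₀ ?_ (Finset.sum_nonneg fun i _ => pow_nonneg hr i)
  rw [Finset.sum_range_succ]
  exact le_add_of_nonneg_right (pow_nonneg hr k)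

lemma fIter_mul_log_lt_gRate {B₁ B₂ t : ℝ} {k : ℕ} (ht₀ : 0 < t) (ht₁ : t < 1)
    (h : Real.log B₂ < Real.log B₁ * ((∑ i ∈ Finset.range k, ((1 - t) / t) ^ i) /
      ∑ i ∈ Finset.range (k + 1), ((1 - t) / t) ^ i)) :
    fIter t k * Real.log B₁ < gRate B₁ B₂ t := by
  have hr : 0 < (1 - t) / t := div_pos (sub_pos.2 ht₁) ht₀
  have hsum := geom_sum_pos hr.le k.succ_ne_zero
  have hf := fIter_mul_geom_sum ht₀ ht₁.le k
  have hsucc := geom_sum_succ (x := (1 - t) / t) (n := k)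
  rw [← mul_div_assoc, lt_div_iff₀ hsum] at h
  set σ := ∑ i ∈ Finset.range k, ((1 - t) / t) ^ i
  set S := ∑ i ∈ Finset.range (k + 1), ((1 - t) / t) ^ i
  have hS : t * (S - 1) = (1 - t) * σ := by
    rw [hsucc]
    field_simp
    ring
  refine lt_of_mul_lt_mul_right ?_ hsum.le
  calc fIter t k * Real.log B₁ * S = t * Real.log B₁ := by rw [mul_right_comm, hf]
    _ < t * Real.log B₁ + (1 - t) * (Real.log B₁ * σ - Real.log B₂ * S) :=
      lt_add_of_pos_right _ (mul_pos (sub_pos.2 ht₁) (sub_pos.2 h))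
    _ = gRate B₁ B₂ t * S := by
      unfold gRate
      linear_combination -Real.log B₁ * hS

lemma tExpM_le {B s : ℝ} {m : ℕ} (hB : 0 < B) (hs₀ : 0 ≤ s) (hs₁ : s ≤ 1)
    (h : pressure s ≤ (fIter s (m - 1) * Real.log B : ℝ)) : tExpM B m ≤ s := by
  rw [tExpM_eq_sInf hB]
  exact csInf_le ⟨0, fun _ h => h.1⟩ ⟨hs₀, hs₁, h⟩

lemma exists_pressure_le_of_tExpM_lt {B u : ℝ} {m : ℕ} (hB : 0 < B) (ht : 0 < tExpM B m)
    (hu : tExpM B m < u) :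
    ∃ s ∈ Ico (tExpM B m) u, s ≤ 1 ∧ pressure s ≤ (fIter s (m - 1) * Real.log B : ℝ) := by
  have hne : {s | 0 ≤ s ∧ s ≤ 1 ∧ pressure s ≤ (fIter s (m - 1) * Real.log B : ℝ)}.Nonempty := by
    by_contra! hempty
    rw [tExpM_eq_sInf hB, hempty, Real.sInf_empty] at ht
    exact lt_irrefl 0 ht
  obtain ⟨s, ⟨hs₀, hs₁, hs⟩, hsu⟩ := exists_lt_of_csInf_lt hne (tExpM_eq_sInf hB m ▸ hu)
  exact ⟨s, ⟨tExpM_le hB hs₀ hs₁ hs, hsu⟩, hs₁, hs⟩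

section GExp

variable {m : ℕ} {B₁ B₂ : ℝ}

lemma exists_pressure_le_gRate_of_tExpM_lt (hB₁ : 0 < B₁) (ht₀ : 0 < tExpM B₁ m)
    (ht₁ : tExpM B₁ m ≤ 1)
    (hrate : fIter (tExpM B₁ m) (m - 1) * Real.log B₁ < gRate B₁ B₂ (tExpM B₁ m)) {u : ℝ}
    (hu : tExpM B₁ m < u) : ∃ s, 0 ≤ s ∧ s < u ∧ pressure s ≤ gRate B₁ B₂ s := by
  have hev : ∀ᶠ s in nhds (tExpM B₁ m), fIter s (m - 1) * Real.log B₁ < gRate B₁ B₂ s :=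
    ((continuousAt_fIter ht₀ ht₁ (m - 1)).mul_const _).eventually_lt
      (continuous_gRate B₁ B₂).continuousAt hrate
  obtain ⟨v, hv, hIco⟩ := exists_Ico_subset_of_mem_nhds hev ⟨u, hu⟩
  obtain ⟨s, hs, -, hpressure⟩ := exists_pressure_le_of_tExpM_lt hB₁ ht₀ (lt_min hu hv)
  obtain ⟨hsu, hsv⟩ := lt_min_iff.1 hs.2
  exact ⟨s, ht₀.le.trans hs.1, hsu,
    hpressure.trans (EReal.coe_le_coe_iff.2 (hIco ⟨hs.1, hsv⟩).le)⟩

lemma gExp_le_tExpM (hB₁ : 0 < B₁) (hB₂ : 0 < B₂) (ht₀ : 0 < tExpM B₁ m) (ht₁ : tExpM B₁ m ≤ 1)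
    (hrate : fIter (tExpM B₁ m) (m - 1) * Real.log B₁ < gRate B₁ B₂ (tExpM B₁ m)) :
    gExp B₁ B₂ ≤ tExpM B₁ m := by
  refine le_of_forall_gt_imp_ge_of_dense fun u hu => ?_
  obtain ⟨s, hs, hsu, hpressure⟩ := exists_pressure_le_gRate_of_tExpM_lt hB₁ ht₀ ht₁ hrate hu
  exact (gExp_le hB₁ hB₂ hs hpressure).trans hsu.le

-- If this failed, it would fail on some `[g, s]`, so `s` would be in the set defining `t`.
lemma fIter_gExp_mul_log_le_gRate (hB₁ : 1 < B₁) (hB₂ : 1 < B₂) (hg : 0 < gExp B₁ B₂)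
    (hgt : gExp B₁ B₂ < tExpM B₁ m) (ht : tExpM B₁ m ≤ 1) :
    fIter (gExp B₁ B₂) (m - 1) * Real.log B₁ ≤ gRate B₁ B₂ (gExp B₁ B₂) := by
  by_contra! hlt
  have hev : ∀ᶠ s in nhds (gExp B₁ B₂), gRate B₁ B₂ s < fIter s (m - 1) * Real.log B₁ :=
    (continuous_gRate B₁ B₂).continuousAt.eventually_lt
      ((continuousAt_fIter hg (hgt.le.trans ht) (m - 1)).mul_const _) hlt
  obtain ⟨v, hv, hIco⟩ := exists_Ico_subset_of_mem_nhds hev ⟨_, hgt⟩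
  obtain ⟨s, hgs, hs⟩ := exists_between (lt_min hgt hv)
  obtain ⟨hst, hsv⟩ := lt_min_iff.1 hs
  refine hst.not_ge (tExpM_le (by linarith) (hg.trans hgs).le (hst.le.trans ht) ?_)
  exact (pressure_lt_gRate hB₁ hB₂ hg hgs).le.trans
    (EReal.coe_le_coe_iff.2 (hIco ⟨hgs.le, hsv⟩).le)

lemma le_mul_geom_sum_of_fIter_mul_le {g b₁ b₂ β : ℝ} {k : ℕ} (hg₀ : 0 < g) (hg₁ : g ≤ 1)
    (hβ : β ≤ b₂) (hg : fIter g k * b₁ ≤ g * b₁ - (1 - g) * b₂) :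
    b₁ ≤ (b₁ - (1 - g) / g * β) * ∑ i ∈ Finset.range (k + 1), ((1 - g) / g) ^ i := by
  have hS := geom_sum_pos (div_nonneg (sub_nonneg.2 hg₁) hg₀.le) k.succ_ne_zero
  have hf := fIter_mul_geom_sum hg₀ hg₁ k
  set S := ∑ i ∈ Finset.range (k + 1), ((1 - g) / g) ^ i
  have hβ' := mul_le_mul_of_nonneg_left hβ (sub_nonneg.2 hg₁)
  refine le_of_mul_le_mul_left ?_ hg₀
  calc g * b₁ = fIter g k * b₁ * S := by rw [mul_right_comm, hf]
    _ ≤ (g * b₁ - (1 - g) * β) * S := mul_le_mul_of_nonneg_right (by linarith) hS.le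
    _ = g * ((b₁ - (1 - g) / g * β) * S) := by field_simp

lemma exists_profile {g c : ℝ} (hm : 2 ≤ m) (hg₀ : 1 / 2 ≤ g) (hg₁ : g < 1)
    (hlog : Real.log B₁ < 2 * Real.log B₂) (hlog' : Real.log B₂ < Real.log B₁)
    (hg : fIter g (m - 1) * Real.log B₁ ≤ gRate B₁ B₂ g) (hc : gRate B₁ B₂ g < c) :
    ∃ T β V₀, Monotone T ∧ T 0 = 0 ∧ T m = Real.log B₁ ∧ β < Real.log B₂ ∧
      (∀ k, T (k + (m - 1)) - T k ≤ β) ∧ 0 < V₀ ∧ V₀ < c ∧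
      ∀ k, g * T (k + 1) - (1 - g) * T k ≤ V₀ := by
  have hgpos : 0 < g := by linarith
  unfold gRate at hg hc
  set b₁ := Real.log B₁
  set b₂ := Real.log B₂
  obtain ⟨β, hβ, hβ₂⟩ := exists_between
    (show max (b₁ / 2) (b₂ - (c - (g * b₁ - (1 - g) * b₂))) < b₂ from
      max_lt (by linarith) (by linarith))
  obtain ⟨hβ₁, hβc⟩ := max_lt_iff.1 hβ
  have hβpos : 0 < β := by linarith
  have hfeasible := le_mul_geom_sum_of_fIter_mul_le hgpos hg₁.le hβ₂.le hg
  rw [Nat.sub_add_cancel (by omega)] at hfeasible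
  have hr₀ : 0 ≤ (1 - g) / g := div_nonneg (by linarith) hgpos.le
  have hr₁ : (1 - g) / g ≤ 1 := (div_le_one hgpos).2 (by linarith)
  have hgr : 1 - g = g * ((1 - g) / g) := (mul_div_cancel₀ _ hgpos.ne').symm
  set r := (1 - g) / g
  have hrβ : r * β ≤ β := mul_le_of_le_one_left hβpos.le hr₁
  refine ⟨greedyProfile m b₁ β r, β, g * b₁ - (1 - g) * β,
    monotone_greedyProfile hr₀ (by linarith) (by linarith),
    greedyProfile_zero (by omega) hβpos.le, greedyProfile_of_le le_rfl, hβ₂,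
    greedyProfile_add_sub_le hm hr₀ hr₁ (by linarith) (by linarith), ?_, ?_, fun k => ?_⟩
  · rw [hgr, mul_assoc, ← mul_sub]
    exact mul_pos hgpos (by linarith)
  · have := mul_le_mul_of_nonneg_right (by linarith : 1 - g ≤ 1) (sub_pos.2 hβ₂).le
    linarith
  · rw [hgr, mul_assoc, mul_assoc, ← mul_sub, ← mul_sub]
    exact mul_le_mul_of_nonneg_left
      (greedyProfile_succ_sub_le hr₀ (by linarith) hfeasible k) hgpos.le

lemma ofReal_le_dimH_digitProductSet {s : ℝ} (hm : 2 ≤ m) (hB₁ : 0 < B₁) (hB₂ : 0 < B₂)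
    (hlog : Real.log B₁ < 2 * Real.log B₂) (hlog' : Real.log B₂ < Real.log B₁)
    (hg₀ : 1 / 2 ≤ gExp B₁ B₂) (hg₁ : gExp B₁ B₂ < 1)
    (hg : fIter (gExp B₁ B₂) (m - 1) * Real.log B₁ ≤ gRate B₁ B₂ (gExp B₁ B₂)) (hs₀ : 0 < s)
    (hs : s < gExp B₁ B₂) : ENNReal.ofReal s ≤ dimH (digitProductSet m B₁ B₂) := by
  obtain ⟨c, hgc, hcs⟩ := EReal.lt_iff_exists_real_btwn.1 (gRate_gExp_lt_pressure hB₁ hB₂ hs₀.le hs)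
  obtain ⟨T, β, V₀, hT, hT₀, hTm, hβ, hTβ, hV₀, hVc, hV⟩ :=
    exists_profile hm hg₀ hg₁ hlog hlog' hg (EReal.coe_lt_coe_iff.1 hgc)
  have hnonneg : ∀ k, 0 ≤ T k := fun k => hT₀ ▸ hT k.zero_le
  refine le_dimH_digitProductSet hB₁ hB₂ hs₀ (hs.trans hg₁) hT hT₀ hTm (fun k => ?_) hV₀ hβ hTβ hVc
    (frequently_le_partitionSum hcs)
  exact (sub_le_sub (mul_le_mul_of_nonneg_right hs.le (hnonneg _))
    (mul_le_mul_of_nonneg_right (sub_le_sub_left hs.le 1) (hnonneg _))).trans (hV k)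

lemma gExp_le_dimH_digitProductSet (hm : 2 ≤ m) (hB₁ : 0 < B₁) (hB₂ : 0 < B₂)
    (hlog : Real.log B₁ < 2 * Real.log B₂) (hlog' : Real.log B₂ < Real.log B₁)
    (hg₀ : 1 / 2 ≤ gExp B₁ B₂) (hg₁ : gExp B₁ B₂ < 1)
    (hg : fIter (gExp B₁ B₂) (m - 1) * Real.log B₁ ≤ gRate B₁ B₂ (gExp B₁ B₂)) :
    ENNReal.ofReal (gExp B₁ B₂) ≤ dimH (digitProductSet m B₁ B₂) := by
  refine le_of_tendsto (x := nhdsWithin (gExp B₁ B₂) (Iio (gExp B₁ B₂)))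
    ENNReal.continuous_ofReal.continuousWithinAt ?_
  filter_upwards [Ioo_mem_nhdsLT (by linarith : 0 < gExp B₁ B₂)] with s hs
  exact ofReal_le_dimH_digitProductSet hm hB₁ hB₂ hlog hlog' hg₀ hg₁ hg hs.1 hs.2

end GExp

lemma log_lt_two_mul_log_of_rpow_half_lt {B₁ B₂ : ℝ} (hB₁ : 0 < B₁)
    (h : B₁ ^ ((1 : ℝ) / 2) < B₂) : Real.log B₁ < 2 * Real.log B₂ := by
  have hlog := Real.log_lt_log (Real.rpow_pos_of_pos hB₁ _) h
  rw [Real.log_rpow hB₁] at hlog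
  linarith

lemma log_lt_log_mul_geom_sum_div_of_lt_rpow {B₁ B₂ t : ℝ} {k : ℕ} (hB₁ : 0 < B₁) (hB₂ : 0 < B₂)
    (ht₀ : 0 < t) (ht : 1 - t ≠ t)
    (h : B₂ < B₁ ^ ((t ^ (k + 1) - t * (1 - t) ^ k) / (t ^ (k + 1) - (1 - t) ^ (k + 1)))) :
    Real.log B₂ < Real.log B₁ * ((∑ i ∈ Finset.range k, ((1 - t) / t) ^ i) /
      ∑ i ∈ Finset.range (k + 1), ((1 - t) / t) ^ i) := by
  have hlog := Real.log_lt_log hB₂ h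
  rwa [Real.log_rpow hB₁, pow_sub_div_eq_geom_sum_div ht₀ ht, mul_comm] at hlog

lemma fIter_gExp_mul_log_le_gRate_of_fIter_tExpM {m : ℕ} {B₁ B₂ : ℝ} (hB₁ : 1 < B₁) (hB₂ : 1 < B₂)
    (ht₀ : 0 < tExpM B₁ m) (ht₁ : tExpM B₁ m ≤ 1) (hg : 0 < gExp B₁ B₂)
    (hrate : fIter (tExpM B₁ m) (m - 1) * Real.log B₁ < gRate B₁ B₂ (tExpM B₁ m)) :
    fIter (gExp B₁ B₂) (m - 1) * Real.log B₁ ≤ gRate B₁ B₂ (gExp B₁ B₂) := by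
  obtain hgt | hgt := (gExp_le_tExpM (by linarith) (by linarith) ht₀ ht₁ hrate).eq_or_lt
  · exact hgt ▸ hrate.le
  · exact fIter_gExp_mul_log_le_gRate hB₁ hB₂ hg hgt ht₁

theorem new_application_case_two (m : ℕ) (hm : 2 ≤ m) (B₁ B₂ : ℝ)
    (hB₁ : 1 < B₁) (hB₂ : 1 < B₂)
    (ht : 1 / 2 < tExpM B₁ m ∧ tExpM B₁ m < 1)
    (hcase₁ : B₁ ^ ((1 : ℝ) / 2) < B₂)
    (hcase₂ : B₂ < B₁ ^ ((tExpM B₁ m ^ m - tExpM B₁ m * (1 - tExpM B₁ m) ^ (m - 1)) /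
      (tExpM B₁ m ^ m - (1 - tExpM B₁ m) ^ m))) :
    dimH {x : ℝ | x ∈ Set.Ioo (0 : ℝ) 1 ∧ Irrational x ∧
      {n : ℕ | B₁ ^ n ≤ ∏ i ∈ Finset.range m, (pq x (n + i) : ℝ)}.Infinite ∧
      (∀ᶠ n : ℕ in Filter.atTop,
        ∏ i ∈ Finset.range (m - 1), (pq x (n + 1 + i) : ℝ) < B₂ ^ n)} =
    ENNReal.ofReal (gExp B₁ B₂) := by
  obtain ⟨k, rfl⟩ : ∃ k, m = k + 1 := ⟨m - 1, by omega⟩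
  have hB₁' : 0 < B₁ := by linarith
  have hB₂' : 0 < B₂ := by linarith
  have ht₀ : 0 < tExpM B₁ (k + 1) := by linarith
  have hlog := log_lt_log_mul_geom_sum_div_of_lt_rpow hB₁' hB₂' ht₀ (by linarith) hcase₂
  have hrate := fIter_mul_log_lt_gRate ht₀ ht.2 hlog
  have hlog' : Real.log B₂ < Real.log B₁ :=
    hlog.trans_le (mul_le_of_le_one_right (Real.log_pos hB₁).le
      (geom_sum_div_geom_sum_succ_le_one (div_nonneg (by linarith) ht₀.le) k))
  obtain ⟨s, hs, -, hpressure⟩ := exists_pressure_le_gRate_of_tExpM_lt hB₁' ht₀ ht.2.le hrate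
    (lt_add_one _)
  have hg := half_le_gExp hB₁' hB₂' hs hpressure
  have hg₀ : 0 < gExp B₁ B₂ := by linarith
  have hg₁ := (gExp_le_tExpM hB₁' hB₂' ht₀ ht.2.le hrate).trans_lt ht.2
  exact le_antisymm (dimH_digitProductSet_le_gExp k.succ_ne_zero hB₁ hB₂ hg₀ hg₁)
    (gExp_le_dimH_digitProductSet hm hB₁' hB₂' (log_lt_two_mul_log_of_rpow_half_lt hB₁' hcase₁)
      hlog' hg hg₁
      (fIter_gExp_mul_log_le_gRate_of_fIter_tExpM hB₁ hB₂ ht₀ ht.2.le hg₀ hrate))
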